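/- Let −d be a fundamental discriminant. Then d is represented primitively over all ℤ_p by the ternary lattices L_i if and only if no prime p dividing N₁ is split in the imaginary quadratic field ℚ(√−d) and no prime p dividing N₂ is inert in ℚ(√−d). -/

import Mathlib

open scoped Quaternion BigOperators Matrix

noncomputable section

namespace Rep

/-! ### Integral binary quadratic forms, class numbers, fundamental discriminants -/

/-- `T` is the matrix of an integral binary quadratic form, i.e. an integral symmetric
matrix `T = (2a, b; b, 2c)` (even diagonal). -/
def IsBinaryMatrix (T : Matrix (Fin 2) (Fin 2) ℤ) : Prop :=
  T 0 1 = T 1 0 ∧ (2 ∣ T 0 0) ∧ (2 ∣ T 1 1)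

/-- The signed discriminant `b² - 4ac` of `T = (2a, b; b, 2c)`. -/
def disc (T : Matrix (Fin 2) (Fin 2) ℤ) : ℤ := T 0 1 ^ 2 - T 0 0 * T 1 1

/-- `T = (2a, b; b, 2c)` is positive definite. -/
def PosDefBinary (T : Matrix (Fin 2) (Fin 2) ℤ) : Prop := 0 < T 0 0 ∧ disc T < 0

/-- `ε(T)`: the number of proper automorphs `U ∈ SL₂(ℤ)`, `UᵀTU = T`, of `T`. -/
def autCount (T : Matrix (Fin 2) (Fin 2) ℤ) : ℕ :=
  Set.ncard {U : Matrix.SpecialLinearGroup (Fin 2) ℤ |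
    (U : Matrix (Fin 2) (Fin 2) ℤ)ᵀ * T * U = T}

/-- proper (`SL₂(ℤ)`-) equivalence of binary forms. -/
def SLEquiv (T T' : Matrix (Fin 2) (Fin 2) ℤ) : Prop :=
  ∃ U : Matrix.SpecialLinearGroup (Fin 2) ℤ, (U : Matrix (Fin 2) (Fin 2) ℤ)ᵀ * T * U = T'

/-- Gauss-reduced positive definite binary form `(2a, b; b, 2c)`:
`-a < b ≤ a ≤ c`, and `b ≥ 0` if `a = c`. -/
def IsReduced (T : Matrix (Fin 2) (Fin 2) ℤ) : Prop :=
  -(T 0 0) < 2 * T 0 1 ∧ 2 * T 0 1 ≤ T 0 0 ∧ T 0 0 ≤ T 1 1 ∧ (T 0 0 = T 1 1 → 0 ≤ T 0 1)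

/-- A canonical set of representatives for the `SL₂(ℤ)`-equivalence classes of positive
definite integral binary quadratic forms of discriminant `-d`: the reduced forms. -/
def reducedForms (d : ℤ) : Set (Matrix (Fin 2) (Fin 2) ℤ) :=
  {T | IsBinaryMatrix T ∧ PosDefBinary T ∧ disc T = -d ∧ IsReduced T}

/-- The class number `h(-d)`: the number of `SL₂(ℤ)`-classes of primitive positive definite
integral binary quadratic forms of discriminant `-d`; for a fundamental discriminant `-d`
this is the class number of `ℚ(√-d)`. -/
def classNumber (d : ℤ) : ℕ :=
  Set.ncard {T | T ∈ reducedForms d ∧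
    Int.gcd (Int.gcd (T 0 0 / 2) (T 0 1)) (T 1 1 / 2) = 1}

/-- `σ₀(n)`, the number of divisors of `n`. -/
def sigma0 (n : ℕ) : ℕ := n.divisors.card

/-- `D` is a fundamental discriminant (the discriminant of the ring of integers of a
quadratic field). -/
def IsFundamentalDiscriminant (D : ℤ) : Prop :=
  D ≠ 1 ∧ ((D % 4 = 1 ∧ Squarefree D) ∨
    (D % 4 = 0 ∧ Squarefree (D / 4) ∧ (D / 4 % 4 = 2 ∨ D / 4 % 4 = 3)))

/-! ### Quadratic lattices via Gram matrices: representation numbers, genus, spinor genus -/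

/-- The number of representations of the binary form with (bilinear) Gram matrix `T` by the
quadratic lattice with (bilinear) Gram matrix `A`. -/
def rMat {m : ℕ} (A : Matrix (Fin m) (Fin m) ℤ) (T : Matrix (Fin 2) (Fin 2) ℤ) : ℕ :=
  Set.ncard {X : Matrix (Fin m) (Fin 2) ℤ | Xᵀ * A * X = T}

/-- The number of representations of the integer `t` by the quadratic form `q(x) = (xᵀAx)/2`
with bilinear Gram matrix `A`. -/
def rQuad {m : ℕ} (A : Matrix (Fin m) (Fin m) ℤ) (t : ℤ) : ℕ :=
  Set.ncard {x : Fin m → ℤ | x ⬝ᵥ A.mulVec x = 2 * t}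

/-- The order of the automorphism group of the lattice with Gram matrix `A`. -/
def autMat {m : ℕ} (A : Matrix (Fin m) (Fin m) ℤ) : ℕ :=
  Set.ncard {U : Matrix (Fin m) (Fin m) ℤ | Uᵀ * A * U = A}

/-- Integral equivalence (isometry) of Gram matrices. -/
def ZEquiv {m : ℕ} (A B : Matrix (Fin m) (Fin m) ℤ) : Prop :=
  ∃ U : Matrix (Fin m) (Fin m) ℤ, IsUnit U.det ∧ Uᵀ * A * U = B

/-- Equivalence of Gram matrices over the `p`-adic integers `ℤ_p`. -/
def ZpEquiv {m : ℕ} (p : ℕ) (hp : p.Prime) (A B : Matrix (Fin m) (Fin m) ℤ) : Prop :=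
  have : Fact p.Prime := ⟨hp⟩
  ∃ U : Matrix (Fin m) (Fin m) ℤ_[p], IsUnit U.det ∧
    Uᵀ * A.map (Int.cast : ℤ → ℤ_[p]) * U = B.map (Int.cast : ℤ → ℤ_[p])

/-- `A` is positive definite (over `ℝ`). -/
def PosDefMat {m : ℕ} (A : Matrix (Fin m) (Fin m) ℤ) : Prop :=
  (A.map (Int.cast : ℤ → ℝ)).PosDef

/-- Two positive definite integral lattices are in the same genus iff they are equivalent
over all `ℤ_p` (and over `ℝ`, which is automatic for positive definite ones). -/
def InSameGenus {m : ℕ} (A B : Matrix (Fin m) (Fin m) ℤ) : Prop :=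
  PosDefMat A ∧ PosDefMat B ∧ ∀ (p : ℕ) (hp : p.Prime), ZpEquiv p hp A B

/-- The reflection in the vector `v` of the quadratic space with Gram matrix `A`. -/
def reflMat {K : Type*} [Field K] {m : ℕ} (A : Matrix (Fin m) (Fin m) K) (v : Fin m → K) :
    Matrix (Fin m) (Fin m) K :=
  1 - (2 / (v ⬝ᵥ A.mulVec v)) • (Matrix.vecMulVec v v * A)

/-- `U` is a rotation (proper isometry) of the quadratic space with Gram matrix `A`
with spinor norm (represented by) `θ`: `U` is a product of an even number of reflections
in anisotropic vectors `v l`, and `θ = ∏ q(v l)`. -/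
def IsRotationWithSpinorNorm {K : Type*} [Field K] {m : ℕ} (A U : Matrix (Fin m) (Fin m) K)
    (θ : K) : Prop :=
  ∃ (r : ℕ) (v : Fin r → (Fin m → K)), Even r ∧ (∀ l, v l ⬝ᵥ A.mulVec (v l) ≠ 0) ∧
    U = (List.ofFn fun l => reflMat A (v l)).prod ∧
    θ = ∏ l : Fin r, (v l ⬝ᵥ A.mulVec (v l)) / 2

/-- The lattices with Gram matrices `A` and `B` lie in the same spinor genus: there is a
rational isometry `S` of `A` and a rational equivalence `C` from `A` to `B` which at every
prime `p` factors as `S` times a rotation of trivial spinor norm times a `ℤ_p`-unit. -/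
def SameSpinorGenus {m : ℕ} (A B : Matrix (Fin m) (Fin m) ℤ) : Prop :=
  InSameGenus A B ∧
  ∃ C S : Matrix (Fin m) (Fin m) ℚ,
    Cᵀ * A.map (Int.cast : ℤ → ℚ) * C = B.map (Int.cast : ℤ → ℚ) ∧
    Sᵀ * A.map (Int.cast : ℤ → ℚ) * S = A.map (Int.cast : ℤ → ℚ) ∧
    ∀ (p : ℕ) (hp : p.Prime),
      have : Fact p.Prime := ⟨hp⟩
      ∃ (Sig : Matrix (Fin m) (Fin m) ℚ_[p]) (θ c : ℚ_[p]) (U : Matrix (Fin m) (Fin m) ℤ_[p]),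
        IsRotationWithSpinorNorm (A.map (Int.cast : ℤ → ℚ_[p])) Sig θ ∧ c ≠ 0 ∧ θ = c ^ 2 ∧
        IsUnit U.det ∧
        C.map (Rat.cast : ℚ → ℚ_[p]) =
          S.map (Rat.cast : ℚ → ℚ_[p]) * Sig * U.map (fun x : ℤ_[p] => (x : ℚ_[p]))

/-- A system of representatives for the isometry classes of lattices in the genus of `A`. -/
structure GenusReps {m : ℕ} (A : Matrix (Fin m) (Fin m) ℤ) where
  reps : Finset (Matrix (Fin m) (Fin m) ℤ)
  mem_genus : ∀ B ∈ reps, InSameGenus A B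
  complete : ∀ B, InSameGenus A B → ∃ C ∈ reps, ZEquiv C B
  inequiv : ∀ B ∈ reps, ∀ C ∈ reps, ZEquiv B C → B = C

/-- The mass `μ` of the genus of `A`. -/
def mass {m : ℕ} {A : Matrix (Fin m) (Fin m) ℤ} (G : GenusReps A) : ℝ :=
  ∑ B ∈ G.reps, (1 : ℝ) / autMat B

/-- Siegel's weighted average `r(gen(A), T)` of the representation numbers of the binary
form `T` over the classes in the genus of `A`. -/
def genusAvgBinary {m : ℕ} {A : Matrix (Fin m) (Fin m) ℤ} (G : GenusReps A)
    (T : Matrix (Fin 2) (Fin 2) ℤ) : ℝ :=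
  (∑ B ∈ G.reps, (rMat B T : ℝ) / autMat B) / mass G

/-- Siegel's weighted average `r(gen(A), t)` of the representation numbers of the integer
`t` over the classes in the genus of `A`. -/
def genusAvgQuad {m : ℕ} {A : Matrix (Fin m) (Fin m) ℤ} (G : GenusReps A) (t : ℤ) : ℝ :=
  (∑ B ∈ G.reps, (rQuad B t : ℝ) / autMat B) / mass G

/-- `o_max`: the maximal order of the automorphism group of a lattice in the genus of `A`. -/
def oMax {m : ℕ} {A : Matrix (Fin m) (Fin m) ℤ} (G : GenusReps A) : ℕ :=
  G.reps.sup autMat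

/-- `ℓ • A⁻¹` is again integral with even diagonal. -/
def EvenIntegralScaledInv {m : ℕ} (A : Matrix (Fin m) (Fin m) ℤ) (ℓ : ℕ) : Prop :=
  (∀ i j, ∃ c : ℤ, (ℓ : ℚ) * (A.map (Int.cast : ℤ → ℚ))⁻¹ i j = c) ∧
    ∀ i, ∃ c : ℤ, (ℓ : ℚ) * (A.map (Int.cast : ℤ → ℚ))⁻¹ i i = 2 * c

/-- `ℓ` is the level of the (even) lattice with bilinear Gram matrix `A`. -/
def IsLevelOf {m : ℕ} (A : Matrix (Fin m) (Fin m) ℤ) (ℓ : ℕ) : Prop :=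
  0 < ℓ ∧ EvenIntegralScaledInv A ℓ ∧
    ∀ ℓ' : ℕ, 0 < ℓ' → EvenIntegralScaledInv A ℓ' → ℓ ∣ ℓ'

/-- `d` is represented primitively by (the `ℤ_p`-completion of) the ternary lattice with Gram
matrix `A` over every `ℤ_p`. -/
def LocallyPrimitivelyRepresents (A : Matrix (Fin 3) (Fin 3) ℤ) (d : ℤ) : Prop :=
  ∀ (p : ℕ) (hp : p.Prime),
    have : Fact p.Prime := ⟨hp⟩
    ∃ x : Fin 3 → ℤ_[p], (∃ i, IsUnit (x i)) ∧
      x ⬝ᵥ (A.map (Int.cast : ℤ → ℤ_[p])).mulVec x = ((2 * d : ℤ) : ℤ_[p])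

/-- `d` is represented by the ternary lattice with Gram matrix `A` over every `ℤ_p`. -/
def LocallyRepresents (A : Matrix (Fin 3) (Fin 3) ℤ) (d : ℤ) : Prop :=
  ∀ (p : ℕ) (hp : p.Prime),
    have : Fact p.Prime := ⟨hp⟩
    ∃ x : Fin 3 → ℤ_[p], x ⬝ᵥ (A.map (Int.cast : ℤ → ℤ_[p])).mulVec x = ((2 * d : ℤ) : ℤ_[p])

/-- The prime `p` is split in the imaginary quadratic field `ℚ(√-d)`. -/
def SplitIn (d : ℤ) (p : ℕ) (hp : p.Prime) : Prop :=
  if p = 2 then (-d) % 8 = 1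
  else
    have : Fact p.Prime := ⟨hp⟩
    legendreSym p (-d) = 1

/-- The prime `p` is inert in the imaginary quadratic field `ℚ(√-d)`. -/
def InertIn (d : ℤ) (p : ℕ) (hp : p.Prime) : Prop :=
  if p = 2 then (-d) % 8 = 5
  else
    have : Fact p.Prime := ⟨hp⟩
    legendreSym p (-d) = -1

end Rep
namespace Rep

/-! ### Quaternion algebras over ℚ, Eichler orders, ideal classes -/

/-- The reduced trace of a quaternion. -/
def trd {a b : ℚ} (x : ℍ[ℚ, a, b]) : ℚ := 2 * x.re

/-- The reduced norm `n` of a quaternion. -/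
def nrd {a b : ℚ} (x : ℍ[ℚ, a, b]) : ℚ := (x * star x).re

/-- The bilinear form `b(x, y) = tr(x ȳ)` associated to the reduced norm form;
note `b(x, x) = 2 n(x)`. -/
def qbil {a b : ℚ} (x y : ℍ[ℚ, a, b]) : ℚ := (x * star y + y * star x).re

/-- The quaternion algebra `(a, b / ℚ)` is ramified at infinity, i.e. `ℍ[ℝ, a, b]` is a
division algebra. -/
def RamifiedAtInfinity (a b : ℚ) : Prop :=
  ∀ x : ℍ[ℝ, (a : ℝ), (b : ℝ)], x ≠ 0 → IsUnit x

/-- The quaternion algebra `(a, b / ℚ)` is ramified at the prime `p`, i.e. `ℍ[ℚ_p, a, b]`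
is a division algebra. -/
def RamifiedAt (a b : ℚ) (p : ℕ) (hp : p.Prime) : Prop :=
  have : Fact p.Prime := ⟨hp⟩
  ∀ x : ℍ[ℚ_[p], (a : ℚ_[p]), (b : ℚ_[p])], x ≠ 0 → IsUnit x

/-- `M` is a full `ℤ`-lattice of rank `m` in the quaternion algebra. -/
def IsLattice {a b : ℚ} (m : ℕ) (M : Submodule ℤ ℍ[ℚ, a, b]) : Prop :=
  ∃ v : Fin m → ℍ[ℚ, a, b], LinearIndependent ℚ v ∧ Submodule.span ℤ (Set.range v) = M

/-- `A` is a Gram matrix (with respect to the bilinear form `b(x,y) = tr(x ȳ)`) of a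
`ℤ`-basis of (the `ℤ`-span of) `M`. -/
def IsGramOf {a b : ℚ} {m : ℕ} (M : Set ℍ[ℚ, a, b]) (A : Matrix (Fin m) (Fin m) ℤ) : Prop :=
  ∃ v : Fin m → ℍ[ℚ, a, b], LinearIndependent ℚ v ∧
    Submodule.span ℤ (Set.range v) = Submodule.span ℤ M ∧
    ∀ i j, (A i j : ℚ) = qbil (v i) (v j)

/-- `A` is a Gram matrix of `M` for the quadratic form rescaled by the factor `s`. -/
def IsGramOfScaled {a b : ℚ} {m : ℕ} (s : ℕ) (M : Set ℍ[ℚ, a, b])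
    (A : Matrix (Fin m) (Fin m) ℤ) : Prop :=
  ∃ v : Fin m → ℍ[ℚ, a, b], LinearIndependent ℚ v ∧
    Submodule.span ℤ (Set.range v) = Submodule.span ℤ M ∧
    ∀ i j, (A i j : ℚ) = s * qbil (v i) (v j)

/-- An order in the quaternion algebra: a full lattice which is a subring. -/
def IsOrder {a b : ℚ} (O : Submodule ℤ ℍ[ℚ, a, b]) : Prop :=
  IsLattice 4 O ∧ (1 : ℍ[ℚ, a, b]) ∈ O ∧ ∀ x ∈ O, ∀ y ∈ O, x * y ∈ O

/-- The left order of a lattice `I`. -/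
def leftOrderSet {a b : ℚ} (I : Set ℍ[ℚ, a, b]) : Set ℍ[ℚ, a, b] :=
  {x | ∀ y ∈ I, x * y ∈ I}

/-- The right order of a lattice `I`. -/
def rightOrderSet {a b : ℚ} (I : Set ℍ[ℚ, a, b]) : Set ℍ[ℚ, a, b] :=
  {x | ∀ y ∈ I, y * x ∈ I}

/-- The order `O` has reduced discriminant `N`, i.e. the Gram matrix of the norm form on `O`
has determinant `N²`.  For squarefree `N` this characterizes the Eichler orders of level `N`
(hereditary orders). -/
def HasReducedDiscriminant {a b : ℚ} (O : Submodule ℤ ℍ[ℚ, a, b]) (N : ℕ) : Prop :=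
  ∃ A : Matrix (Fin 4) (Fin 4) ℤ, IsGramOf (O : Set ℍ[ℚ, a, b]) A ∧ A.det = (N : ℤ) ^ 2

/-- The pairs `(x, y) ∈ M × M` representing the binary form `T = (2a, b; b, 2c)`, i.e. with
`n(x) = a`, `b(x,y) = b`, `n(y) = c` (equivalently, with bilinear Gram matrix `T`). -/
def repPairs {a b : ℚ} (M : Set ℍ[ℚ, a, b]) (T : Matrix (Fin 2) (Fin 2) ℤ) :
    Set (ℍ[ℚ, a, b] × ℍ[ℚ, a, b]) :=
  {xy | xy.1 ∈ M ∧ xy.2 ∈ M ∧ qbil xy.1 xy.1 = T 0 0 ∧ qbil xy.1 xy.2 = T 0 1 ∧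
    qbil xy.2 xy.2 = T 1 1}

/-- `r(M, T)`: the number of representations of the binary form `T` by the quaternary
lattice `M` (with the reduced norm as quadratic form). -/
def rLat {a b : ℚ} (M : Set ℍ[ℚ, a, b]) (T : Matrix (Fin 2) (Fin 2) ℤ) : ℕ :=
  Set.ncard (repPairs M T)

/-- As `rLat`, but with the quadratic form rescaled by the factor `s`. -/
def rLatScaled {a b : ℚ} (s : ℕ) (M : Set ℍ[ℚ, a, b]) (T : Matrix (Fin 2) (Fin 2) ℤ) : ℕ :=
  Set.ncard {xy : ℍ[ℚ, a, b] × ℍ[ℚ, a, b] | xy.1 ∈ M ∧ xy.2 ∈ M ∧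
    (s : ℚ) * qbil xy.1 xy.1 = T 0 0 ∧ (s : ℚ) * qbil xy.1 xy.2 = T 0 1 ∧
    (s : ℚ) * qbil xy.2 xy.2 = T 1 1}

/-- The averaged representation number `r(M, d) = Σ_T r(M, T)/ε(T)`, the sum over the
`SL₂(ℤ)`-classes of integral binary forms of discriminant `-d`. -/
def rAvg {a b : ℚ} (M : Set ℍ[ℚ, a, b]) (d : ℤ) : ℝ :=
  ∑ᶠ T ∈ reducedForms d, (rLat M T : ℝ) / autCount T

/-- The dual lattice `M^#` of `M` with respect to `b(x,y) = tr(x ȳ)`. -/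
def dualLattice {a b : ℚ} (M : Set ℍ[ℚ, a, b]) : Set ℍ[ℚ, a, b] :=
  {x | ∀ y ∈ M, ∃ m : ℤ, qbil x y = m}

/-- The partial localization `M[1/s]` of `M`. -/
def locInv {a b : ℚ} (s : ℕ) (M : Submodule ℤ ℍ[ℚ, a, b]) : Set ℍ[ℚ, a, b] :=
  {x | ∃ k : ℕ, ((s : ℚ) ^ k) • x ∈ M}

/-- The data of an Eichler order `R` of squarefree level `N = N₁N₂` in the (definite)
quaternion algebra over `ℚ` ramified exactly at `∞` and the primes dividing `N₁`, together
with the ideals `I_ij = y_i R y_j⁻¹` coming from a double coset decomposition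
`D^×_𝔸 = ∪_j D^× y_j R^×_𝔸` (equivalently: a complete system of representatives of the
left ideal classes and their linking ideals), normalized to have reduced norm `ℤ`. -/
structure EichlerSetting (N₁ N₂ : ℕ) where
  a : ℚ
  b : ℚ
  N₁_pos : 0 < N₁
  N₂_pos : 0 < N₂
  squarefree : Squarefree (N₁ * N₂)
  odd_ram : Odd N₁.primeFactors.card
  ram_inf : RamifiedAtInfinity a b
  ram_iff : ∀ (p : ℕ) (hp : p.Prime), RamifiedAt a b p hp ↔ p ∣ N₁
  /-- the class number of the Eichler order -/
  h : ℕ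
  h_pos : 0 < h
  /-- the orders `R_i = y_i R y_i⁻¹`; `R = R_0` -/
  Rord : Fin h → Submodule ℤ ℍ[ℚ, a, b]
  /-- the ideals `I_ij = y_i R y_j⁻¹` -/
  I : Fin h → Fin h → Submodule ℤ ℍ[ℚ, a, b]
  Rord_order : ∀ i, IsOrder (Rord i)
  Rord_disc : ∀ i, HasReducedDiscriminant (Rord i) (N₁ * N₂)
  I_lattice : ∀ i j, IsLattice 4 (I i j)
  I_diag : ∀ i, I i i = Rord i
  I_left : ∀ i j, leftOrderSet (I i j : Set ℍ[ℚ, a, b]) = (Rord i : Set ℍ[ℚ, a, b])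
  I_right : ∀ i j, rightOrderSet (I i j : Set ℍ[ℚ, a, b]) = (Rord j : Set ℍ[ℚ, a, b])
  I_nrd_integral : ∀ i j, ∀ x ∈ I i j, ∃ m : ℤ, nrd x = m
  I_nrd_primitive : ∀ i j, (1 : ℚ) ∈ Submodule.span ℤ (nrd '' (I i j : Set ℍ[ℚ, a, b]))
  /-- for fixed `i`, the `I i j` represent all classes of left `R_i`-ideals -/
  classes_complete : ∀ (i : Fin h) (J : Submodule ℤ ℍ[ℚ, a, b]), IsLattice 4 J →
    leftOrderSet (J : Set ℍ[ℚ, a, b]) = (Rord i : Set ℍ[ℚ, a, b]) →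
    ∃ (j : Fin h) (u : (ℍ[ℚ, a, b])ˣ),
      J = Submodule.map (LinearMap.mulRight ℤ (u : ℍ[ℚ, a, b])) (I i j)
  classes_distinct : ∀ (i j j' : Fin h) (u : (ℍ[ℚ, a, b])ˣ),
    I i j' = Submodule.map (LinearMap.mulRight ℤ (u : ℍ[ℚ, a, b])) (I i j) → j = j'

namespace EichlerSetting

variable {N₁ N₂ : ℕ} (S : EichlerSetting N₁ N₂)

/-- The Eichler order `R` itself. -/
def R : Submodule ℤ ℍ[ℚ, S.a, S.b] := S.Rord ⟨0, S.h_pos⟩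

/-- The ternary lattice `L_i = {x ∈ ℤ·1 + 2R_i | tr(x) = 0}`. -/
def L (i : Fin S.h) : Set ℍ[ℚ, S.a, S.b] :=
  {x | (∃ m : ℤ, ∃ r ∈ S.Rord i, x = m • (1 : ℍ[ℚ, S.a, S.b]) + 2 • r) ∧ x + star x = 0}

/-- `e_i`, the number of units of the order `R_i`. -/
def units (i : Fin S.h) : ℕ :=
  Set.ncard {x : ℍ[ℚ, S.a, S.b] | x ∈ S.Rord i ∧ nrd x = 1}

/-- The underlying lattice `I_ij^# ∩ I_ij[1/s]` of the rescaled partial dual `I_ij^{*,s}`. -/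
def pd (i j : Fin S.h) (s : ℕ) : Set ℍ[ℚ, S.a, S.b] :=
  dualLattice (S.I i j : Set ℍ[ℚ, S.a, S.b]) ∩ locInv s (S.I i j)

/-- `r(rpd(I_ij, N'), T) = Σ_{s ∣ N'} r(I_ij^{*,s}, T)`: the total number of representations
of `T` by the rescaled partial duals `I_ij^{*,s}`, `s ∣ N'`. -/
def rRpd (i j : Fin S.h) (N' : ℕ) (T : Matrix (Fin 2) (Fin 2) ℤ) : ℕ :=
  ∑ s ∈ N'.divisors, rLatScaled s (S.pd i j s) T

/-- `r(rpd(I_ij, N'), d) = Σ_{s ∣ N'} r(I_ij^{*,s}, d)`, averaged over the classes of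
binary forms of discriminant `-d`. -/
def rRpdAvg (i j : Fin S.h) (N' : ℕ) (d : ℤ) : ℝ :=
  ∑ᶠ T ∈ reducedForms d, (S.rRpd i j N' T : ℝ) / autCount T

end EichlerSetting

end Rep

namespace Rep

/-! ### Local lemmas over `ℤ_p` -/

theorem punit_iff {p : ℕ} [Fact p.Prime] (x : ℤ_[p]) : IsUnit x ↔ ¬ (p : ℤ_[p]) ∣ x := by
  rw [← PadicInt.norm_lt_one_iff_dvd, ← PadicInt.not_isUnit_iff, not_not]

theorem toZMod_eq_zero {p : ℕ} [Fact p.Prime] (x : ℤ_[p]) :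
    PadicInt.toZMod x = 0 ↔ (p : ℤ_[p]) ∣ x := by
  rw [← RingHom.mem_ker, PadicInt.ker_toZMod, PadicInt.maximalIdeal_eq_span_p,
    Ideal.mem_span_singleton]

theorem toZModPow_eq_zero {p : ℕ} [Fact p.Prime] (n : ℕ) (x : ℤ_[p]) :
    PadicInt.toZModPow n x = 0 ↔ (p : ℤ_[p]) ^ n ∣ x := by
  rw [← RingHom.mem_ker, PadicInt.ker_toZModPow, Ideal.mem_span_singleton]

theorem toZMod_surj {p : ℕ} [Fact p.Prime] (x : ZMod p) :
    ∃ y : ℤ_[p], PadicInt.toZMod y = x := ⟨(x.val : ℤ_[p]), by simp⟩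

open Polynomial in
theorem hensel_quad {p : ℕ} [Fact p.Prime] (A B C t : ℤ_[p])
    (h : (p : ℤ_[p]) ∣ A * t ^ 2 + B * t + C) (hu : IsUnit (2 * A * t + B)) :
    ∃ s : ℤ_[p], A * s ^ 2 + B * s + C = 0 := by
  have key := @hensels_lemma p _ ℤ_[p] _ _
    (Polynomial.C A * X ^ 2 + Polynomial.C B * X + Polynomial.C C) t
  have e1 : ∀ s : ℤ_[p], aeval s (Polynomial.C A * X ^ 2 + Polynomial.C B * X + Polynomial.C C)
      = A * s ^ 2 + B * s + C := by intro s; simp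
  have e2 : aeval t (derivative (Polynomial.C A * X ^ 2 + Polynomial.C B * X + Polynomial.C C))
      = 2 * A * t + B := by simp; ring
  rw [e1, e2, PadicInt.isUnit_iff.mp hu, one_pow] at key
  obtain ⟨z, hz, -⟩ := key ((PadicInt.norm_lt_one_iff_dvd _).mpr h)
  exact ⟨z, by rw [← e1]; exact hz⟩

theorem isUnit_two_of_odd {p : ℕ} [Fact p.Prime] (h2 : p ≠ 2) : IsUnit (2 : ℤ_[p]) := by
  rw [punit_iff]
  intro h
  have h' : (p : ℤ_[p]) ^ 1 ∣ ((2 : ℤ) : ℤ_[p]) := by simpa using h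
  rw [PadicInt.pow_p_dvd_int_iff, pow_one] at h'
  have := (Nat.prime_dvd_prime_iff_eq (Fact.out : p.Prime) Nat.prime_two).mp (by exact_mod_cast h')
  exact h2 this

/-- odd `p`: a unit which is a square mod `p` is a square -/
theorem isSquare_of_odd {p : ℕ} [Fact p.Prime] (h2 : p ≠ 2) (e t : ℤ_[p]) (he : IsUnit e)
    (h : (p : ℤ_[p]) ∣ e - t ^ 2) : ∃ s, e = s ^ 2 := by
  have ht : IsUnit t := by
    rw [punit_iff] at he ⊢
    intro h'
    apply he
    have := dvd_add h (Dvd.dvd.mul_left h' t)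
    rwa [show e - t ^ 2 + t * t = e by ring] at this
  obtain ⟨s, hs⟩ := hensel_quad 1 0 (-e) t (by
    rw [show 1 * t ^ 2 + 0 * t + -e = -(e - t ^ 2) by ring]; exact (dvd_neg).mpr h)
    (by simpa using (isUnit_two_of_odd h2).mul ht)
  exact ⟨s, by linear_combination -hs⟩

theorem isSquare_of_two (e : ℤ_[2]) (h : (8 : ℤ_[2]) ∣ e - 1) : ∃ s, e = s ^ 2 := by
  obtain ⟨k, hk⟩ := h
  obtain ⟨s, hs⟩ := hensel_quad (p := 2) 1 1 (-2 * k) 0 ⟨-k, by push_cast; ring⟩ (by simp)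
  exact ⟨1 + 2 * s, by linear_combination hk - 4 * hs⟩

theorem zmod_two_binary : ∀ α β γ e : ZMod 2, β ^ 2 - 4 * α * γ ≠ 0 → e ≠ 0 →
    ∃ x y : ZMod 2, α * x ^ 2 + β * x * y + γ * y ^ 2 = e := by decide

theorem zmod_binary {p : ℕ} [Fact p.Prime] (α β γ e : ZMod p) (h : β ^ 2 - 4 * α * γ ≠ 0)
    (he : e ≠ 0) : ∃ x y : ZMod p, α * x ^ 2 + β * x * y + γ * y ^ 2 = e := by
  by_cases h2 : p = 2
  · subst h2
    exact zmod_two_binary α β γ e h he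
  · have h2' : (2 : ZMod p) ≠ 0 := by
      intro h
      have : ((2 : ℕ) : ZMod p) = 0 := by exact_mod_cast h
      rw [ZMod.natCast_eq_zero_iff] at this
      exact h2 ((Nat.prime_dvd_prime_iff_eq (Fact.out : p.Prime) Nat.prime_two).mp this)
    by_cases hα : α = 0
    · subst hα
      have hβ : β ≠ 0 := by
        rintro rfl
        simp at h
      exact ⟨(e - γ) / β, 1, by field_simp; ring⟩
    · open Polynomial in
      obtain ⟨X, Y, hXY⟩ := FiniteField.exists_root_sum_quadratic (R := ZMod p)
        (f := C 1 * X ^ 2 + C 0 * X + C (-(4 * α * e)))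
        (g := C (-(β ^ 2 - 4 * α * γ)) * X ^ 2 + C 0 * X + C 0)
        (Polynomial.degree_quadratic one_ne_zero)
        (Polynomial.degree_quadratic (neg_ne_zero.mpr h))
        (by
          rw [ZMod.card]
          rcases (Fact.out : p.Prime).eq_two_or_odd with h | h
          · exact absurd h h2
          · exact h)
      simp at hXY
      refine ⟨(X - β * Y) / (2 * α), Y, ?_⟩
      have h4 : (4 * α) ≠ 0 := by
        rw [show (4 : ZMod p) = 2 * 2 by norm_num]
        exact mul_ne_zero (mul_ne_zero h2' h2') hα
      apply mul_left_cancel₀ h4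
      field_simp
      linear_combination 4 * hXY

/-- Binary forms of unit discriminant represent all units. -/
theorem binary_unit {p : ℕ} [Fact p.Prime] (α β γ e : ℤ_[p]) (h : IsUnit (β ^ 2 - 4 * α * γ))
    (he : IsUnit e) : ∃ x y : ℤ_[p], α * x ^ 2 + β * x * y + γ * y ^ 2 = e := by
  have nz : ∀ z : ℤ_[p], IsUnit z → PadicInt.toZMod z ≠ 0 := by
    intro z hz; rw [Ne, toZMod_eq_zero, ← punit_iff]; exact hz
  obtain ⟨x', y', hxy⟩ := zmod_binary (PadicInt.toZMod α) (PadicInt.toZMod β) (PadicInt.toZMod γ)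
    (PadicInt.toZMod e) (by simpa [map_ofNat] using nz _ h) (nz _ he)
  obtain ⟨x, rfl⟩ := toZMod_surj x'
  obtain ⟨y, rfl⟩ := toZMod_surj y'
  have hd : (p : ℤ_[p]) ∣ α * x ^ 2 + β * x * y + γ * y ^ 2 - e := by
    rw [← toZMod_eq_zero]; simp [hxy]
  by_cases h1 : IsUnit (2 * α * x + β * y)
  · obtain ⟨s, hs⟩ := hensel_quad α (β * y) (γ * y ^ 2 - e) x (by
      convert hd using 1; ring) h1
    exact ⟨s, y, by linear_combination hs⟩
  by_cases h2 : IsUnit (2 * γ * y + β * x)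
  · obtain ⟨s, hs⟩ := hensel_quad γ (β * x) (α * x ^ 2 - e) y (by
      convert hd using 1; ring) h2
    exact ⟨x, s, by linear_combination hs⟩
  exfalso
  rw [punit_iff, not_not] at h1 h2
  have hx : (p : ℤ_[p]) ∣ x := by
    rw [← h.dvd_mul_left]
    have := dvd_sub (Dvd.dvd.mul_left h2 β) (Dvd.dvd.mul_left h1 (2 * γ))
    convert this using 1; ring
  have hy : (p : ℤ_[p]) ∣ y := by
    rw [← h.dvd_mul_left]
    have := dvd_sub (Dvd.dvd.mul_left h1 β) (Dvd.dvd.mul_left h2 (2 * α))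
    convert this using 1; ring
  rw [punit_iff] at he
  apply he
  have h3 := dvd_sub (dvd_add (Dvd.dvd.mul_left hx (α * x + β * y)) (Dvd.dvd.mul_left hy (γ * y))) hd
  convert h3 using 1; ring


/-- The adjoint of a ternary quadratic form. -/
def Fq {R : Type*} [CommRing R] (a b c u v w x y z : R) : R :=
  (4 * b * c - u ^ 2) * x ^ 2 + (4 * a * c - v ^ 2) * y ^ 2 + (4 * a * b - w ^ 2) * z ^ 2
    + 2 * (v * w - 2 * a * u) * y * z + 2 * (u * w - 2 * b * v) * x * z
    + 2 * (u * v - 2 * c * w) * x * y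

/-- The half discriminant of a ternary quadratic form. -/
def Nq {R : Type*} [CommRing R] (a b c u v w : R) : R :=
  4 * a * b * c + u * v * w - a * u ^ 2 - b * v ^ 2 - c * w ^ 2

theorem Fq_cyc {R : Type*} [CommRing R] (a b c u v w x y z : R) :
    Fq b c a v w u y z x = Fq a b c u v w x y z := by unfold Fq; ring

theorem Nq_cyc {R : Type*} [CommRing R] (a b c u v w : R) :
    Nq b c a v w u = Nq a b c u v w := by unfold Nq; ring

theorem core_id {R : Type*} [CommRing R] (a b c u v w x y z : R) :
    (4 * a * b - w ^ 2) * Fq a b c u v w x y z =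
      ((4 * a * b - w ^ 2) * z + (u * w - 2 * b * v) * x + (v * w - 2 * a * u) * y) ^ 2
      + 4 * Nq a b c u v w * (b * x ^ 2 + (-w) * x * y + a * y ^ 2) := by
  unfold Fq Nq; ring

/-- Data describing the adjoint form locally as (binary unit discriminant) plus (rank one). -/
def Core (p : ℕ) [Fact p.Prime] (a b c u v w : ℤ) (δ α β γ : ℤ_[p]) : Prop :=
  IsUnit δ ∧ β ^ 2 - 4 * α * γ = -δ ∧
  (∀ Y x y : ℤ_[p], ∃ x1 x2 x3 : ℤ_[p], δ * Fq (a : ℤ_[p]) b c u v w x1 x2 x3 =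
    Y ^ 2 + 4 * (Nq a b c u v w : ℤ) * (α * x ^ 2 + β * x * y + γ * y ^ 2)) ∧
  (∀ x1 x2 x3 : ℚ_[p], ∃ Y x y : ℚ_[p], (δ : ℚ_[p]) * Fq (a : ℚ_[p]) b c u v w x1 x2 x3 =
    Y ^ 2 + 4 * (Nq a b c u v w : ℤ) * (α * x ^ 2 + β * x * y + γ * y ^ 2) ∧
    (Y = 0 → x = 0 → y = 0 → x1 = 0 ∧ x2 = 0 ∧ x3 = 0)) ∧
  (∀ x1 x2 x3 : ℤ_[p], ∃ Y x y : ℤ_[p], δ * Fq (a : ℤ_[p]) b c u v w x1 x2 x3 =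
    Y ^ 2 + 4 * (Nq a b c u v w : ℤ) * (α * x ^ 2 + β * x * y + γ * y ^ 2)) ∧
  (∃ x1 x2 x3 : ℤ_[p], Fq (a : ℤ_[p]) b c u v w x1 x2 x3 = δ)

theorem Core_cyc {p : ℕ} [Fact p.Prime] {a b c u v w : ℤ} {δ α β γ : ℤ_[p]}
    (h : Core p b c a v w u δ α β γ) : Core p a b c u v w δ α β γ := by
  obtain ⟨h1, h2, h3, h4, h5, h6⟩ := h
  rw [Nq_cyc] at h3 h4 h5
  refine ⟨h1, h2, ?_, ?_, ?_, ?_⟩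
  · intro Y x y
    obtain ⟨x1, x2, x3, h⟩ := h3 Y x y
    exact ⟨x3, x1, x2, by rw [← Fq_cyc]; exact h⟩
  · intro x1 x2 x3
    obtain ⟨Y, x, y, h, h'⟩ := h4 x2 x3 x1
    refine ⟨Y, x, y, by rw [← Fq_cyc]; exact h, fun e1 e2 e3 => ?_⟩
    obtain ⟨g1, g2, g3⟩ := h' e1 e2 e3
    exact ⟨g3, g1, g2⟩
  · intro x1 x2 x3
    obtain ⟨Y, x, y, h⟩ := h5 x2 x3 x1
    exact ⟨Y, x, y, by rw [← Fq_cyc]; exact h⟩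
  · obtain ⟨x1, x2, x3, h⟩ := h6
    exact ⟨x3, x1, x2, by rw [← Fq_cyc]; exact h⟩

theorem isUnit_intCast {p : ℕ} [Fact p.Prime] (k : ℤ) : IsUnit (k : ℤ_[p]) ↔ ¬ (p : ℤ) ∣ k := by
  rw [punit_iff]
  have := PadicInt.pow_p_dvd_int_iff (p := p) 1 k
  rw [pow_one, pow_one] at this
  rw [this]

theorem core_of_unit {p : ℕ} [Fact p.Prime] {a b c u v w : ℤ}
    (h : ¬ (p : ℤ) ∣ 4 * a * b - w ^ 2) :
    Core p a b c u v w (4 * a * b - w ^ 2) b (-w) a := by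
  have hu : IsUnit (4 * (a : ℤ_[p]) * b - w ^ 2) := by
    rw [← isUnit_intCast (p := p)] at h
    push_cast at h
    exact h
  have hN : ((Nq a b c u v w : ℤ) : ℤ_[p]) = Nq (a : ℤ_[p]) b c u v w := by
    simp [Nq]
  have hN' : ((Nq a b c u v w : ℤ) : ℚ_[p]) = Nq (a : ℚ_[p]) b c u v w := by
    simp [Nq]
  refine ⟨hu, by ring, ?_, ?_, ?_, ?_⟩
  · intro Y x y
    obtain ⟨g, hg⟩ := hu.exists_right_inv
    refine ⟨x, y, g * (Y - (u * w - 2 * b * v) * x - (v * w - 2 * a * u) * y), ?_⟩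
    rw [core_id, hN, ← mul_assoc, hg]
    ring
  · intro x1 x2 x3
    refine ⟨(4 * a * b - w ^ 2) * x3 + (u * w - 2 * b * v) * x1 + (v * w - 2 * a * u) * x2,
      x1, x2, ?_, ?_⟩
    · rw [hN']
      push_cast
      exact core_id _ _ _ _ _ _ _ _ _
    · rintro hY rfl rfl
      refine ⟨rfl, rfl, ?_⟩
      simp only [mul_zero, add_zero] at hY
      rcases mul_eq_zero.mp hY with h0 | h0
      · exfalso
        have : ((4 * a * b - w ^ 2 : ℤ) : ℚ_[p]) = 0 := by push_cast; exact h0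
        have h1 : (4 * a * b - w ^ 2 : ℤ) = 0 := by exact_mod_cast this
        exact h (h1 ▸ dvd_zero _)
      · exact h0
  · intro x1 x2 x3
    refine ⟨(4 * a * b - w ^ 2) * x3 + (u * w - 2 * b * v) * x1 + (v * w - 2 * a * u) * x2,
      x1, x2, ?_⟩
    rw [hN, core_id]
  · exact ⟨0, 0, 1, by simp [Fq]⟩

theorem det_adj (a b c u v w : ℤ) :
    (4 * b * c - u ^ 2) * (4 * a * c - v ^ 2) * (4 * a * b - w ^ 2)
    + 2 * (v * w - 2 * a * u) * (u * w - 2 * b * v) * (u * v - 2 * c * w)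
    - (4 * b * c - u ^ 2) * (v * w - 2 * a * u) ^ 2
    - (4 * a * c - v ^ 2) * (u * w - 2 * b * v) ^ 2
    - (4 * a * b - w ^ 2) * (u * v - 2 * c * w) ^ 2 = 4 * Nq a b c u v w ^ 2 := by
  unfold Nq; ring

/-- off-diagonal case -/
theorem rep_offdiag {p : ℕ} [Fact p.Prime] (h2 : p ≠ 2) {a b c u v w : ℤ}
    (hv : (p : ℤ) ∣ 4 * a * c - v ^ 2)
    (h : ¬ (p : ℤ) ∣ u * v - 2 * c * w) (d : ℤ_[p]) :
    ∃ x1 x2 x3 : ℤ_[p], Fq (a : ℤ_[p]) b c u v w x1 x2 x3 = d := by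
  have hu := (isUnit_intCast (p := p) _).mpr h
  have hu2 := (isUnit_two_of_odd h2).mul hu
  obtain ⟨g, hg⟩ := hu2.exists_right_inv
  obtain ⟨k, hk⟩ := hv
  have hk' : (4 * a * c - v ^ 2 : ℤ_[p]) = p * k := by exact_mod_cast congrArg (Int.cast : ℤ → ℤ_[p]) hk
  push_cast at hg hu2
  set t : ℤ_[p] := g * (d - (4 * b * c - u ^ 2)) with ht
  obtain ⟨s, hs⟩ := hensel_quad (4 * a * c - v ^ 2 : ℤ_[p]) (2 * (u * v - 2 * c * w))
    ((4 * b * c - u ^ 2) - d) t ⟨k * t ^ 2, by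
      rw [hk', ht]
      linear_combination (d - (4 * b * c - u ^ 2)) * hg⟩ (by
      rw [punit_iff] at hu2 ⊢
      intro hh
      apply hu2
      rw [hk'] at hh
      have := dvd_sub hh (Dvd.intro (2 * k * t) rfl : (p : ℤ_[p]) ∣ p * (2 * k * t))
      convert this using 1; ring)
  refine ⟨1, s, 0, ?_⟩
  unfold Fq
  linear_combination hs

theorem int_prime_dvd_four {p : ℕ} (hp : p.Prime) (h2 : p ≠ 2) : ¬ (p : ℤ) ∣ 4 := by
  intro h
  have h' : p ∣ 2 ^ 2 := by exact_mod_cast h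
  exact h2 ((Nat.prime_dvd_prime_iff_eq hp Nat.prime_two).mp (hp.dvd_of_dvd_pow h'))

theorem core_or {p : ℕ} [hp : Fact p.Prime] {a b c u v w : ℤ}
    (hsq : ¬ (p : ℤ) ^ 2 ∣ Nq a b c u v w) :
    (∃ δ α β γ : ℤ_[p], Core p a b c u v w δ α β γ) ∨
    (¬ (p : ℤ) ∣ Nq a b c u v w ∧
      ∀ d : ℤ_[p], ∃ x1 x2 x3 : ℤ_[p], Fq (a : ℤ_[p]) b c u v w x1 x2 x3 = d) := by
  by_cases h3 : (p : ℤ) ∣ 4 * a * b - w ^ 2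
  swap
  · exact Or.inl ⟨_, _, _, _, core_of_unit h3⟩
  by_cases h1 : (p : ℤ) ∣ 4 * b * c - u ^ 2
  swap
  · exact Or.inl ⟨_, _, _, _, Core_cyc (core_of_unit h1)⟩
  by_cases h2 : (p : ℤ) ∣ 4 * a * c - v ^ 2
  swap
  · exact Or.inl ⟨_, _, _, _, Core_cyc (Core_cyc (core_of_unit (by
      rwa [show 4 * c * a - v ^ 2 = 4 * a * c - v ^ 2 by ring])))⟩
  have hpi : Prime (p : ℤ) := Nat.prime_iff_prime_int.mp hp.out
  by_cases hp2 : p = 2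
  · exfalso
    subst hp2
    have ev : ∀ k t : ℤ, ((2 : ℕ) : ℤ) ∣ 4 * k - t ^ 2 → ∃ s, t = 2 * s := by
      intro k t h
      have : (2 : ℤ) ∣ t ^ 2 := by
        have h' : (2 : ℤ) ∣ 4 * k - t ^ 2 := by exact_mod_cast h
        have := dvd_sub (Dvd.intro (2 * k) rfl : (2 : ℤ) ∣ 2 * (2 * k)) h'
        rwa [show 2 * (2 * k) - (4 * k - t ^ 2) = t ^ 2 by ring] at this
      exact Int.prime_two.dvd_of_dvd_pow this
    obtain ⟨w', rfl⟩ := ev (a * b) w (by rwa [← mul_assoc])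
    obtain ⟨u', rfl⟩ := ev (b * c) u (by rwa [← mul_assoc])
    obtain ⟨v', rfl⟩ := ev (a * c) v (by rwa [← mul_assoc])
    apply hsq
    refine ⟨a * b * c + 2 * u' * v' * w' - a * u' ^ 2 - b * v' ^ 2 - c * w' ^ 2, ?_⟩
    unfold Nq; push_cast; ring
  by_cases g3 : (p : ℤ) ∣ u * v - 2 * c * w
  swap
  · right
    refine ⟨?_, fun d => rep_offdiag hp2 h2 g3 d⟩
    intro hN
    apply g3
    apply hpi.dvd_of_dvd_pow (n := 2)
    have := dvd_sub (Dvd.dvd.mul_right h1 (4 * a * c - v ^ 2)) (Dvd.dvd.mul_left hN (4 * c))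
    convert this using 1; unfold Nq; ring
  by_cases g1 : (p : ℤ) ∣ v * w - 2 * a * u
  swap
  · right
    refine ⟨?_, fun d => ?_⟩
    · intro hN
      apply g1
      apply hpi.dvd_of_dvd_pow (n := 2)
      have := dvd_sub (Dvd.dvd.mul_right h2 (4 * a * b - w ^ 2)) (Dvd.dvd.mul_left hN (4 * a))
      convert this using 1; unfold Nq; ring
    · obtain ⟨x1, x2, x3, h⟩ := rep_offdiag (b := c) hp2 (c := a) (a := b) (v := w) (u := v) (w := u)
        (by rwa [show 4 * b * a - w ^ 2 = 4 * a * b - w ^ 2 by ring]) g1 d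
      exact ⟨x3, x1, x2, by rw [← Fq_cyc]; exact h⟩
  by_cases g2 : (p : ℤ) ∣ u * w - 2 * b * v
  swap
  · right
    refine ⟨?_, fun d => ?_⟩
    · intro hN
      apply g2
      apply hpi.dvd_of_dvd_pow (n := 2)
      have := dvd_sub (Dvd.dvd.mul_right h1 (4 * a * b - w ^ 2)) (Dvd.dvd.mul_left hN (4 * b))
      convert this using 1; unfold Nq; ring
    · obtain ⟨x1, x2, x3, h⟩ := rep_offdiag (b := a) hp2 (c := b) (a := c) (v := u) (u := w) (w := v)
        (by rwa [show 4 * c * b - u ^ 2 = 4 * b * c - u ^ 2 by ring])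
        (by rwa [show w * u - 2 * b * v = u * w - 2 * b * v by ring]) d
      exact ⟨x2, x3, x1, by rw [← Fq_cyc, ← Fq_cyc]; exact h⟩
  exfalso
  have hdet := det_adj a b c u v w
  obtain ⟨A1, e1⟩ := h1
  obtain ⟨A2, e2⟩ := h2
  obtain ⟨A3, e3⟩ := h3
  obtain ⟨B1, e4⟩ := g1
  obtain ⟨B2, e5⟩ := g2
  obtain ⟨B3, e6⟩ := g3
  rw [e1, e2, e3, e4, e5, e6] at hdet
  have hdet2 : (p : ℤ) ^ 3 * (A1 * A2 * A3 + 2 * B1 * B2 * B3 - A1 * B1 ^ 2 - A2 * B2 ^ 2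
      - A3 * B3 ^ 2) = 4 * Nq a b c u v w ^ 2 := by rw [← hdet]; ring
  have hN : (p : ℤ) ∣ Nq a b c u v w := by
    have : (p : ℤ) ∣ 4 * Nq a b c u v w ^ 2 := by
      rw [← hdet2, pow_succ', mul_assoc]; exact Dvd.intro _ rfl
    rcases hpi.dvd_or_dvd this with h | h
    · exact absurd h (int_prime_dvd_four hp.out hp2)
    · exact hpi.dvd_of_dvd_pow h
  obtain ⟨n', hn'⟩ := hN
  rw [hn'] at hdet2 hsq
  have hp0 : (p : ℤ) ^ 2 ≠ 0 := pow_ne_zero _ hpi.ne_zero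
  have h5 : (p : ℤ) * (A1 * A2 * A3 + 2 * B1 * B2 * B3 - A1 * B1 ^ 2 - A2 * B2 ^ 2
      - A3 * B3 ^ 2) = 4 * n' ^ 2 := by
    apply mul_left_cancel₀ hp0
    rw [← mul_assoc, ← pow_succ, hdet2]; ring
  have h6 : (p : ℤ) ∣ 4 * n' ^ 2 := Dvd.intro _ h5
  apply hsq
  rw [pow_two]
  apply mul_dvd_mul_left
  rcases hpi.dvd_or_dvd h6 with h | h
  · exact absurd h (int_prime_dvd_four hp.out hp2)
  · exact hpi.dvd_of_dvd_pow h


theorem Core.rep {p : ℕ} [Fact p.Prime] {a b c u v w : ℤ} {δ α β γ : ℤ_[p]}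
    (h : Core p a b c u v w δ α β γ) {d Y x y : ℤ_[p]}
    (hd : δ * d = Y ^ 2 + 4 * (Nq a b c u v w : ℤ) * (α * x ^ 2 + β * x * y + γ * y ^ 2)) :
    ∃ x1 x2 x3 : ℤ_[p], Fq (a : ℤ_[p]) b c u v w x1 x2 x3 = d := by
  obtain ⟨h1, h2, h3, -⟩ := h
  obtain ⟨x1, x2, x3, e⟩ := h3 Y x y
  exact ⟨x1, x2, x3, h1.mul_left_cancel (e.trans hd.symm)⟩

/-- representation of `δ d = Y² + k * q` where `k q` is `k` times a unit -/
theorem Core.rep_unit {p : ℕ} [Fact p.Prime] {a b c u v w : ℤ} {δ α β γ : ℤ_[p]}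
    (h : Core p a b c u v w δ α β γ) {d Y e : ℤ_[p]} (he : IsUnit e)
    (hd : δ * d = Y ^ 2 + 4 * (Nq a b c u v w : ℤ) * e) :
    ∃ x1 x2 x3 : ℤ_[p], Fq (a : ℤ_[p]) b c u v w x1 x2 x3 = d := by
  obtain ⟨x, y, hxy⟩ := binary_unit α β γ e (by rw [h.2.1]; exact h.1.neg) he
  apply h.rep (Y := Y) (x := x) (y := y)
  rw [hxy, hd]

theorem Core.rep_sq {p : ℕ} [Fact p.Prime] {a b c u v w : ℤ} {δ α β γ : ℤ_[p]}
    (h : Core p a b c u v w δ α β γ) {d Y : ℤ_[p]}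
    (hd : δ * d = Y ^ 2) :
    ∃ x1 x2 x3 : ℤ_[p], Fq (a : ℤ_[p]) b c u v w x1 x2 x3 = d := by
  apply h.rep (Y := Y) (x := 0) (y := 0)
  rw [hd]; ring

theorem two_cases (x : ℤ_[2]) : (∃ k, x = 2 * k) ∨ (∃ k, x = 2 * k + 1) := by
  have h : ∀ y : ZMod 2, y = 0 ∨ y - 1 = 0 := by decide
  rcases h (PadicInt.toZMod x) with h | h
  · left
    rw [toZMod_eq_zero] at h
    exact_mod_cast h
  · right
    have h' : PadicInt.toZMod (x - 1) = 0 := by simpa using h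
    rw [toZMod_eq_zero] at h'
    obtain ⟨k, hk⟩ := h'
    exact ⟨k, by push_cast at hk; linear_combination hk⟩

theorem isUnit_odd (k : ℤ_[2]) : IsUnit (2 * k + 1) := by
  rw [punit_iff]
  rintro ⟨m, hm⟩
  have : IsUnit (2 : ℤ_[2]) := IsUnit.of_mul_eq_one (m - k) (by push_cast at hm; linear_combination -hm)
  rw [punit_iff] at this
  exact this (by norm_num)

theorem odd_of_isUnit {x : ℤ_[2]} (h : IsUnit x) : ∃ k, x = 2 * k + 1 := by
  rcases two_cases x with ⟨k, rfl⟩ | h'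
  · rw [punit_iff] at h
    exact absurd (by exact_mod_cast Dvd.intro k rfl) h
  · exact h'

theorem Core.beta_odd {a b c u v w : ℤ} {δ α β γ : ℤ_[2]}
    (h : Core 2 a b c u v w δ α β γ) : ∃ j, β = 2 * j + 1 ∧ ∃ i, δ = 4 * α * γ - 1 - 8 * i := by
  rcases two_cases β with ⟨k, rfl⟩ | ⟨k, rfl⟩
  · exfalso
    have h1 := h.1
    rw [punit_iff] at h1
    apply h1
    refine ⟨2 * α * γ - 2 * k ^ 2, ?_⟩
    push_cast
    linear_combination h.2.1
  · refine ⟨k, rfl, ?_⟩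
    have : ∃ i, k * (k + 1) = 2 * i := by
      rcases two_cases k with ⟨m, rfl⟩ | ⟨m, rfl⟩
      · exact ⟨m * (2 * m + 1), by ring⟩
      · exact ⟨(2 * m + 1) * (m + 1), by ring⟩
    obtain ⟨i, hi⟩ := this
    exact ⟨i, by linear_combination h.2.1 - 4 * hi⟩

/-- `p ∤ N`: everything is represented. -/
theorem Core.good {p : ℕ} [Fact p.Prime] {a b c u v w : ℤ} {δ α β γ : ℤ_[p]}
    (h : Core p a b c u v w δ α β γ) (hN : ¬ (p : ℤ) ∣ Nq a b c u v w) (d : ℤ)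
    (hd : ∃ m, d = 4 * m ∨ d = 4 * m - 1) :
    ∃ x1 x2 x3 : ℤ_[p], Fq (a : ℤ_[p]) b c u v w x1 x2 x3 = d := by
  have hNu := (isUnit_intCast (p := p) _).mpr hN
  by_cases hp2 : p = 2
  · subst hp2
    obtain ⟨g, hg⟩ := hNu.exists_right_inv
    have hgu : IsUnit g := IsUnit.of_mul_eq_one _ (by rw [mul_comm]; exact hg)
    obtain ⟨j, hj, i, hi⟩ := h.beta_odd
    obtain ⟨m, hm | hm⟩ := hd
    · have hm' : (d : ℤ_[2]) = 4 * m := by exact_mod_cast congrArg (Int.cast : ℤ → ℤ_[2]) hm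
      rcases two_cases (δ * m) with ⟨k, hk⟩ | ⟨k, hk⟩
      · apply h.rep_unit (Y := 2) (e := g * (2 * (k - 1) + 1)) (hgu.mul (isUnit_odd _))
        rw [hm']
        linear_combination 4 * hk - 4 * (2 * (k - 1) + 1) * hg
      · apply h.rep_unit (Y := 0) (e := g * (2 * k + 1)) (hgu.mul (isUnit_odd _))
        rw [hm']
        linear_combination 4 * hk - 4 * (2 * k + 1) * hg
    · have hm' : (d : ℤ_[2]) = 4 * m - 1 := by exact_mod_cast congrArg (Int.cast : ℤ → ℤ_[2]) hm
      rcases two_cases (δ * m - (α * γ - 2 * i)) with ⟨k, hk⟩ | ⟨k, hk⟩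
      · obtain ⟨s, hs⟩ := isSquare_of_two (1 + 8 * k) ⟨k, by ring⟩
        apply h.rep_sq (Y := s)
        rw [hm', ← hs]
        linear_combination 4 * hk - hi
      · apply h.rep_unit (Y := 1) (e := g * (2 * k + 1)) (hgu.mul (isUnit_odd _))
        rw [hm']
        linear_combination 4 * hk - 4 * (2 * k + 1) * hg - hi
  · have h4 : IsUnit (4 * ((Nq a b c u v w : ℤ) : ℤ_[p])) := by
      rw [show (4 : ℤ_[p]) = 2 * 2 by norm_num]
      exact ((isUnit_two_of_odd hp2).mul (isUnit_two_of_odd hp2)).mul hNu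
    obtain ⟨g, hg⟩ := h4.exists_right_inv
    have hgu : IsUnit g := IsUnit.of_mul_eq_one _ (by rw [mul_comm]; exact hg)
    by_cases hdu : IsUnit (d : ℤ_[p])
    · apply h.rep_unit (Y := 0) (e := g * (δ * d)) (hgu.mul (h.1.mul hdu))
      linear_combination - (δ * d) * hg
    · apply h.rep_unit (Y := 1) (e := g * (δ * d - 1)) (hgu.mul _)
      · linear_combination - (δ * d - 1) * hg
      · rw [punit_iff] at hdu ⊢
        rw [not_not] at hdu
        intro h'
        have := dvd_sub (Dvd.dvd.mul_left hdu δ) h'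
        rw [sub_sub_cancel] at this
        exact (punit_iff _).mp isUnit_one this

/-- `p ∥ N` and `p` ramified -/
theorem Core.ram {p : ℕ} [Fact p.Prime] {a b c u v w : ℤ} {δ α β γ : ℤ_[p]}
    (h : Core p a b c u v w δ α β γ) {n' : ℤ} (hN : Nq a b c u v w = p * n')
    (hn' : ¬ (p : ℤ) ∣ n') (d : ℤ)
    (hd2 : p = 2 → ∃ m, d = 4 * m ∧ (m % 4 = 2 ∨ m % 4 = 1))
    (hd : p ≠ 2 → ∃ m, d = p * m ∧ ¬ (p : ℤ) ∣ m) :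
    ∃ x1 x2 x3 : ℤ_[p], Fq (a : ℤ_[p]) b c u v w x1 x2 x3 = d := by
  have hNu := (isUnit_intCast (p := p) _).mpr hn'
  have hN' : ((Nq a b c u v w : ℤ) : ℤ_[p]) = p * n' := by rw [hN]; push_cast; rfl
  by_cases hp2 : p = 2
  · subst hp2
    obtain ⟨g, hg⟩ := hNu.exists_right_inv
    have hgu : IsUnit g := IsUnit.of_mul_eq_one _ (by rw [mul_comm]; exact hg)
    obtain ⟨j, hj, i, hi⟩ := h.beta_odd
    obtain ⟨m, rfl, hm⟩ := hd2 rfl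
    rcases hm with hm | hm
    · obtain ⟨k, rfl⟩ : ∃ k, m = 2 * (2 * k + 1) := ⟨m / 4, by omega⟩
      apply h.rep_unit (Y := 0) (e := g * (δ * (2 * k + 1)))
        (hgu.mul (h.1.mul (isUnit_odd _)))
      rw [hN']
      push_cast
      linear_combination - 8 * (δ * (2 * k + 1)) * hg
    · obtain ⟨k, rfl⟩ : ∃ k, m = 4 * k + 1 := ⟨m / 4, by omega⟩
      apply h.rep_unit (Y := 2) (e := g * (2 * (δ * k + α * γ - 2 * i - 1) + 1))
        (hgu.mul (isUnit_odd _))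
      rw [hN']
      push_cast
      linear_combination - 8 * (2 * (δ * k + α * γ - 2 * i - 1) + 1) * hg + 4 * hi
  · obtain ⟨m, rfl, hm⟩ := hd hp2
    have h4 : IsUnit (4 * (n' : ℤ_[p])) := by
      rw [show (4 : ℤ_[p]) = 2 * 2 by norm_num]
      exact ((isUnit_two_of_odd hp2).mul (isUnit_two_of_odd hp2)).mul hNu
    obtain ⟨g, hg⟩ := h4.exists_right_inv
    have hgu : IsUnit g := IsUnit.of_mul_eq_one _ (by rw [mul_comm]; exact hg)
    apply h.rep_unit (Y := 0) (e := g * (δ * m))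
      (hgu.mul (h.1.mul ((isUnit_intCast (p := p) _).mpr hm)))
    rw [hN']
    push_cast
    linear_combination - (p : ℤ_[p]) * (δ * m) * hg

/-- odd `p`, `-δ` a nonsquare unit -/
theorem aniso_odd {p : ℕ} [Fact p.Prime] (hp2 : p ≠ 2) {δ t Y : ℤ_[p]} (hδ : IsUnit δ)
    (hns : ¬ ∃ s, -δ = s ^ 2) (h : (p : ℤ_[p]) ∣ Y ^ 2 + δ * t ^ 2) : (p : ℤ_[p]) ∣ t := by
  by_contra ht
  rw [← punit_iff] at ht
  obtain ⟨g, hg⟩ := ht.exists_right_inv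
  apply hns
  apply isSquare_of_odd hp2 (-δ) (Y * g) hδ.neg
  have := Dvd.dvd.mul_right h (-(g ^ 2))
  convert this using 1
  linear_combination δ * (t * g + 1) * hg

theorem zmod8_a : ∀ T Y : ZMod 8, 3 * T ^ 2 + Y ^ 2 = 0 → 4 * T = 0 ∧ 4 * Y = 0 := by decide

theorem zmod4_a : ∀ T Y k : ZMod 4, 3 * T ^ 2 + Y ^ 2 + 2 * k = 0 → 2 * k = 0 := by decide

theorem zmod2_a : ∀ x y : ZMod 2, x ^ 2 + x * y + y ^ 2 = 0 → x = 0 ∧ y = 0 := by decide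

theorem Core.aniso_int {p : ℕ} [Fact p.Prime] {a b c u v w : ℤ} {δ α β γ : ℤ_[p]}
    (h : Core p a b c u v w δ α β γ) (n' : ℤ_[p])
    (hn' : IsUnit n') (hns : ¬ ∃ s, -δ = s ^ 2) (t Y x y : ℤ_[p])
    (heq : δ * t ^ 2 + Y ^ 2 + 4 * (p * n') * (α * x ^ 2 + β * x * y + γ * y ^ 2) = 0) :
    (p : ℤ_[p]) ∣ t ∧ (p : ℤ_[p]) ∣ Y ∧ (p : ℤ_[p]) ∣ x ∧ (p : ℤ_[p]) ∣ y := by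
  have hpp : Prime (p : ℤ_[p]) := PadicInt.prime_p
  by_cases hp2 : p = 2
  · subst hp2
    have h2ne : (2 : ℤ_[2]) ≠ 0 := by exact_mod_cast hpp.ne_zero
    obtain ⟨j, hj, i, hi⟩ := h.beta_odd
    obtain ⟨⟨ka, hka⟩, ⟨kc, hkc⟩⟩ : (∃ k, α = 2 * k + 1) ∧ (∃ k, γ = 2 * k + 1) := by
      have hag : ¬ ∃ k, α * γ = 2 * k := by
        rintro ⟨k, hk⟩
        exact hns (isSquare_of_two _ ⟨i - k, by linear_combination - hi - 4 * hk⟩)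
      constructor
      · rcases two_cases α with ⟨k, hk⟩ | h'
        · exact absurd ⟨k * γ, by rw [hk]; ring⟩ hag
        · exact h'
      · rcases two_cases γ with ⟨k, hk⟩ | h'
        · exact absurd ⟨k * α, by rw [hk]; ring⟩ hag
        · exact h'
    obtain ⟨e, he⟩ : ∃ e, δ = 8 * e + 3 := ⟨2 * ka * kc + ka + kc - i, by
      rw [hi, hka, hkc]; ring⟩
    set q := α * x ^ 2 + β * x * y + γ * y ^ 2 with hq
    have e8 : PadicInt.toZModPow (p := 2) 3 (3 * t ^ 2 + Y ^ 2) = 0 := by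
      rw [toZModPow_eq_zero]
      refine ⟨-(e * t ^ 2 + n' * q), ?_⟩
      rw [he] at heq
      push_cast at heq ⊢
      linear_combination heq
    have e8' := zmod8_a (PadicInt.toZModPow (p := 2) 3 t) (PadicInt.toZModPow (p := 2) 3 Y)
      (by simpa [map_ofNat] using e8)
    have half : ∀ z : ℤ_[2], (4 : ZMod 8) * PadicInt.toZModPow (p := 2) 3 z = 0 → ∃ k, z = 2 * k := by
      intro z hz
      have : PadicInt.toZModPow (p := 2) 3 (4 * z) = 0 := by
        rw [map_mul, map_ofNat]; exact hz
      rw [toZModPow_eq_zero] at this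
      obtain ⟨k, hk⟩ := this
      refine ⟨k, ?_⟩
      apply mul_left_cancel₀ (mul_ne_zero h2ne h2ne)
      push_cast at hk
      linear_combination hk
    obtain ⟨t', ht'⟩ := half t e8'.1
    obtain ⟨Y', hY'⟩ := half Y e8'.2
    have heq2 : δ * t' ^ 2 + Y' ^ 2 + 2 * (n' * q) = 0 := by
      apply mul_left_cancel₀ (mul_ne_zero h2ne h2ne)
      rw [ht', hY'] at heq
      push_cast at heq
      linear_combination heq
    have e4 : PadicInt.toZModPow (p := 2) 2 (3 * t' ^ 2 + Y' ^ 2 + 2 * (n' * q)) = 0 := by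
      rw [toZModPow_eq_zero]
      refine ⟨-(2 * e * t' ^ 2), ?_⟩
      rw [he] at heq2
      push_cast
      linear_combination heq2
    have e4' := zmod4_a (PadicInt.toZModPow (p := 2) 2 t') (PadicInt.toZModPow (p := 2) 2 Y')
      (PadicInt.toZModPow (p := 2) 2 (n' * q))
      (by simpa only [map_add, map_mul, map_pow, map_ofNat] using e4)
    have e4'' : PadicInt.toZModPow (p := 2) 2 (2 * (n' * q)) = 0 := by
      rw [map_mul, map_ofNat]; exact e4'
    rw [toZModPow_eq_zero] at e4''
    have hq2 : ((2 : ℕ) : ℤ_[2]) ∣ q := by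
      rw [← hn'.dvd_mul_left]
      obtain ⟨k, hk⟩ := e4''
      refine ⟨k, ?_⟩
      apply mul_left_cancel₀ h2ne
      push_cast at hk ⊢
      linear_combination hk
    have hq3 : ((2 : ℕ) : ℤ_[2]) ∣ x ^ 2 + x * y + y ^ 2 := by
      obtain ⟨k, hk⟩ := hq2
      refine ⟨k - (ka * x ^ 2 + j * x * y + kc * y ^ 2), ?_⟩
      rw [hq, hka, hkc, hj] at hk
      push_cast at hk ⊢
      linear_combination hk
    rw [← toZMod_eq_zero] at hq3
    have hxy := zmod2_a (PadicInt.toZMod x) (PadicInt.toZMod y) (by simpa using hq3)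
    rw [toZMod_eq_zero, toZMod_eq_zero] at hxy
    exact ⟨⟨t', by push_cast; exact ht'⟩, ⟨Y', by push_cast; exact hY'⟩, hxy⟩
  · have hY : (p : ℤ_[p]) ∣ Y ^ 2 + δ * t ^ 2 :=
      ⟨-(4 * n' * (α * x ^ 2 + β * x * y + γ * y ^ 2)), by linear_combination heq⟩
    have ht := aniso_odd hp2 h.1 hns hY
    have hY' : (p : ℤ_[p]) ∣ Y := by
      apply hpp.dvd_of_dvd_pow (n := 2)
      have := dvd_sub hY (Dvd.dvd.mul_left ht (δ * t))
      convert this using 1; ring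
    refine ⟨ht, hY', ?_⟩
    obtain ⟨t', rfl⟩ := ht
    obtain ⟨Y', rfl⟩ := hY'
    have h4 : IsUnit (4 * n') := by
      rw [show (4 : ℤ_[p]) = 2 * 2 by norm_num]
      exact ((isUnit_two_of_odd hp2).mul (isUnit_two_of_odd hp2)).mul hn'
    have hq : (p : ℤ_[p]) ∣ α * x ^ 2 + β * x * y + γ * y ^ 2 := by
      rw [← h4.dvd_mul_left]
      refine ⟨-(δ * t' ^ 2 + Y' ^ 2), ?_⟩
      apply mul_left_cancel₀ hpp.ne_zero
      linear_combination heq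
    have hb := h.2.1
    constructor
    · apply aniso_odd hp2 h.1 hns (Y := 2 * γ * y + β * x)
      have := Dvd.dvd.mul_left hq (4 * γ)
      convert this using 1
      linear_combination x ^ 2 * hb
    · apply aniso_odd hp2 h.1 hns (Y := 2 * α * x + β * y)
      have := Dvd.dvd.mul_left hq (4 * α)
      convert this using 1
      linear_combination y ^ 2 * hb


theorem scale4 {p : ℕ} [Fact p.Prime] (f : Fin 4 → ℚ_[p]) (hf : ∃ i, f i ≠ 0) :
    ∃ (k : ℚ_[p]) (g : Fin 4 → ℤ_[p]), k ≠ 0 ∧ (∀ i, (g i : ℚ_[p]) = k * f i) ∧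
      ∃ i, IsUnit (g i) := by
  obtain ⟨i0, h0⟩ := Finite.exists_max (fun i => ‖f i‖)
  have hne : f i0 ≠ 0 := by
    obtain ⟨i, hi⟩ := hf
    intro h
    have := h0 i
    rw [h, norm_zero] at this
    exact hi (norm_le_zero_iff.mp this)
  have hle : ∀ i, ‖(f i0)⁻¹ * f i‖ ≤ 1 := by
    intro i
    rw [norm_mul, norm_inv, inv_mul_le_one₀ (norm_pos_iff.mpr hne)]
    exact h0 i
  refine ⟨(f i0)⁻¹, fun i => ⟨(f i0)⁻¹ * f i, hle i⟩, inv_ne_zero hne, fun i => rfl, i0, ?_⟩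
  refine PadicInt.isUnit_iff.mpr ?_
  change ‖(f i0)⁻¹ * f i0‖ = 1
  rw [inv_mul_cancel₀ hne, norm_one]

/-- the quaternary norm form is anisotropic over `ℚ_p` -/
def Aniso (p : ℕ) [Fact p.Prime] (a b c u v w : ℤ) : Prop :=
  ∀ t x1 x2 x3 : ℚ_[p], t ^ 2 + Fq (a : ℚ_[p]) b c u v w x1 x2 x3 = 0 →
    t = 0 ∧ x1 = 0 ∧ x2 = 0 ∧ x3 = 0

theorem Core.aniso {p : ℕ} [Fact p.Prime] {a b c u v w : ℤ} {δ α β γ : ℤ_[p]}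
    (h : Core p a b c u v w δ α β γ) {n' : ℤ} (hN : Nq a b c u v w = p * n')
    (hn' : ¬ (p : ℤ) ∣ n') (hns : ¬ ∃ s, -δ = s ^ 2) : Aniso p a b c u v w := by
  intro t x1 x2 x3 heq
  obtain ⟨Y, x, y, hF, hz⟩ := h.2.2.2.1 x1 x2 x3
  have heq2 : (δ : ℚ_[p]) * t ^ 2 + Y ^ 2 +
      4 * (p * n') * (α * x ^ 2 + β * x * y + γ * y ^ 2) = 0 := by
    rw [hN] at hF
    push_cast at hF
    linear_combination (δ : ℚ_[p]) * heq - hF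
  by_cases hall : ∃ i, (![t, Y, x, y] : Fin 4 → ℚ_[p]) i ≠ 0
  · exfalso
    obtain ⟨k, g, hk, hg, i, hi⟩ := scale4 _ hall
    have g0 := hg 0
    have g1 := hg 1
    have g2 := hg 2
    have g3 := hg 3
    simp only [Matrix.cons_val] at g0 g1 g2 g3
    have := h.aniso_int n' ((isUnit_intCast _).mpr hn') hns (g 0) (g 1) (g 2) (g 3) (by
      have hc : (((δ * (g 0) ^ 2 + (g 1) ^ 2 + 4 * (p * n') * (α * (g 2) ^ 2 + β * (g 2) * (g 3)
        + γ * (g 3) ^ 2)) : ℤ_[p]) : ℚ_[p]) = ((0 : ℤ_[p]) : ℚ_[p]) := by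
        have c4 : ((4 : ℤ_[p]) : ℚ_[p]) = 4 := map_ofNat (PadicInt.Coe.ringHom (p := p)) 4
        push_cast
        rw [g0, g1, g2, g3, c4]
        linear_combination k ^ 2 * heq2
      exact PadicInt.ext hc)
    obtain ⟨d0, d1, d2, d3⟩ := this
    rw [punit_iff] at hi
    fin_cases i
    · exact hi d0
    · exact hi d1
    · exact hi d2
    · exact hi d3
  · push Not at hall
    have e0 : t = 0 := hall 0
    have e1 : Y = 0 := hall 1
    have e2 : x = 0 := hall 2
    have e3 : y = 0 := hall 3
    exact ⟨e0, hz e1 e2 e3⟩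

theorem Aniso.ne {p : ℕ} [Fact p.Prime] {a b c u v w : ℤ} (h : Aniso p a b c u v w)
    {x1 x2 x3 s : ℤ_[p]} (hF : Fq (a : ℤ_[p]) b c u v w x1 x2 x3 = -s ^ 2) : s = 0 := by
  have hc := congrArg (fun z : ℤ_[p] => (z : ℚ_[p])) hF
  have := (h s x1 x2 x3 (by
    simp only [Fq] at hc ⊢
    have c4 : ((4 : ℤ_[p]) : ℚ_[p]) = 4 := map_ofNat (PadicInt.Coe.ringHom (p := p)) 4
    have c2 : ((2 : ℤ_[p]) : ℚ_[p]) = 2 := map_ofNat (PadicInt.Coe.ringHom (p := p)) 2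
    push_cast at hc
    try rw [c4] at hc
    try rw [c2] at hc
    linear_combination hc)).1
  exact PadicInt.ext this

theorem Core.ns_of_aniso {p : ℕ} [Fact p.Prime] {a b c u v w : ℤ} {δ α β γ : ℤ_[p]}
    (h : Core p a b c u v w δ α β γ) (ha : Aniso p a b c u v w) : ¬ ∃ s, -δ = s ^ 2 := by
  rintro ⟨s, hs⟩
  obtain ⟨x1, x2, x3, hx⟩ := h.2.2.2.2.2
  have : s = 0 := ha.ne (x1 := x1) (x2 := x2) (x3 := x3) (by rw [hx, ← hs, neg_neg])
  rw [this] at hs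
  have h1 := h.1
  rw [← neg_neg δ, hs] at h1
  simp at h1

/-! Consequences of `-d` being fundamental. -/

theorem fund_mod4 {d : ℤ} (h : IsFundamentalDiscriminant (-d)) :
    ∃ m, d = 4 * m ∨ d = 4 * m - 1 := by
  obtain ⟨-, ⟨h, -⟩ | ⟨h, -⟩⟩ := h
  · exact ⟨(d + 1) / 4, Or.inr (by omega)⟩
  · exact ⟨d / 4, Or.inl (by omega)⟩

theorem fund_two {d : ℤ} (h : IsFundamentalDiscriminant (-d)) (h2 : (2 : ℤ) ∣ d) :
    ∃ m, d = 4 * m ∧ (m % 4 = 2 ∨ m % 4 = 1) := by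
  obtain ⟨-, ⟨h, -⟩ | ⟨h, -, h'⟩⟩ := h
  · omega
  · exact ⟨d / 4, by omega, by omega⟩

theorem fund_odd {d : ℤ} (h : IsFundamentalDiscriminant (-d)) {p : ℕ} (hp : p.Prime)
    (hp2 : p ≠ 2) : ¬ (p : ℤ) * p ∣ d := by
  intro hd
  have hpi : Prime (p : ℤ) := Nat.prime_iff_prime_int.mp hp
  obtain ⟨-, ⟨-, h⟩ | ⟨h4, h, -⟩⟩ := h
  · exact hpi.not_isUnit (h p ((dvd_neg).mpr hd))
  · apply hpi.not_isUnit
    apply h p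
    have e : d = 4 * -(-d / 4) := by omega
    rw [e] at hd
    have hco : IsCoprime ((p : ℤ) * p) 4 := by
      have : IsCoprime (p : ℤ) 2 := by
        have := Nat.isCoprime_iff_coprime.mpr ((Nat.coprime_primes hp Nat.prime_two).mpr hp2)
        exact_mod_cast this
      rw [show (4 : ℤ) = 2 * 2 by norm_num]
      exact (this.mul_right this).mul_left (this.mul_right this)
    exact (dvd_neg).mp (hco.dvd_of_dvd_mul_left hd)

theorem Core.ram' {p : ℕ} [hp : Fact p.Prime] {a b c u v w : ℤ} {δ α β γ : ℤ_[p]}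
    (h : Core p a b c u v w δ α β γ) {n' : ℤ} (hN : Nq a b c u v w = p * n')
    (hn' : ¬ (p : ℤ) ∣ n') {d : ℤ} (hd : IsFundamentalDiscriminant (-d)) (hpd : (p : ℤ) ∣ d) :
    ∃ x1 x2 x3 : ℤ_[p], Fq (a : ℤ_[p]) b c u v w x1 x2 x3 = d := by
  apply h.ram hN hn'
  · rintro rfl
    exact fund_two hd hpd
  · intro hp2
    obtain ⟨m, rfl⟩ := hpd
    refine ⟨m, rfl, fun hm => fund_odd hd hp.out hp2 (mul_dvd_mul_left _ hm)⟩

theorem isSquare_zmod {p : ℕ} [Fact p.Prime] (hp2 : p ≠ 2) {e : ℤ_[p]} (he : IsUnit e)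
    (h : IsSquare (PadicInt.toZMod e)) : ∃ s, e = s ^ 2 := by
  obtain ⟨r, hr⟩ := h
  obtain ⟨t, rfl⟩ := toZMod_surj r
  apply isSquare_of_odd hp2 e t he
  rw [← toZMod_eq_zero, map_sub, hr, map_pow]
  ring

theorem split_sq {p : ℕ} (hp : p.Prime) {d : ℤ} (h : SplitIn d p hp) :
    haveI : Fact p.Prime := ⟨hp⟩
    IsUnit (d : ℤ_[p]) ∧ ∃ s : ℤ_[p], -(d : ℤ_[p]) = s ^ 2 := by
  haveI : Fact p.Prime := ⟨hp⟩
  unfold SplitIn at h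
  by_cases hp2 : p = 2
  · subst hp2
    rw [if_pos rfl] at h
    refine ⟨(isUnit_intCast _).mpr (by push_cast; omega), isSquare_of_two _ ?_⟩
    refine ⟨(((-d - 1) / 8 : ℤ) : ℤ_[2]), ?_⟩
    have : -d - 1 = 8 * ((-d - 1) / 8) := by omega
    exact_mod_cast congrArg (Int.cast : ℤ → ℤ_[2]) this
  · rw [if_neg hp2] at h
    replace h : legendreSym p (-d) = 1 := h
    have hne : ((-d : ℤ) : ZMod p) ≠ 0 := by
      intro h0
      rw [(legendreSym.eq_zero_iff p (-d)).mpr h0] at h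
      norm_num at h
    have hu : IsUnit (d : ℤ_[p]) := by
      rw [isUnit_intCast]
      intro hd
      exact hne ((ZMod.intCast_zmod_eq_zero_iff_dvd _ _).mpr ((dvd_neg).mpr hd))
    refine ⟨hu, isSquare_zmod hp2 hu.neg ?_⟩
    have := (legendreSym.eq_one_iff p hne).mp h
    simpa using this

theorem local_ram {p : ℕ} (hp : p.Prime) {a b c u v w : ℤ} {n' : ℤ}
    (hN : Nq a b c u v w = p * n') (hn' : ¬ (p : ℤ) ∣ n') {d : ℤ}
    (hd : IsFundamentalDiscriminant (-d)) :
    haveI : Fact p.Prime := ⟨hp⟩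
    Aniso p a b c u v w →
    ((∃ x1 x2 x3 : ℤ_[p], Fq (a : ℤ_[p]) b c u v w x1 x2 x3 = d) ↔ ¬ SplitIn d p hp) := by
  haveI : Fact p.Prime := ⟨hp⟩
  intro ha
  constructor
  · rintro ⟨x1, x2, x3, hx⟩ hs
    obtain ⟨hu, s, hs⟩ := split_sq hp hs
    have : s = 0 := ha.ne (x1 := x1) (x2 := x2) (x3 := x3) (by rw [hx, ← hs, neg_neg])
    rw [this] at hs
    rw [neg_eq_iff_eq_neg.mp hs] at hu
    simp at hu
  · intro hns
    have hpi : Prime (p : ℤ) := Nat.prime_iff_prime_int.mp hp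
    have hsq : ¬ (p : ℤ) ^ 2 ∣ Nq a b c u v w := by
      rw [hN, pow_two]
      intro h
      exact hn' ((mul_dvd_mul_iff_left hpi.ne_zero).mp h)
    rcases core_or (p := p) hsq with ⟨δ, α, β, γ, hC⟩ | ⟨h, -⟩
    swap
    · exact absurd (hN ▸ Dvd.intro _ rfl) h
    by_cases hpd : (p : ℤ) ∣ d
    · exact hC.ram' hN hn' hd hpd
    have hδ := hC.ns_of_aniso ha
    suffices ∃ s, δ * d = s ^ 2 by
      obtain ⟨s, hs⟩ := this
      exact hC.rep_sq hs
    unfold SplitIn at hns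
    by_cases hp2 : p = 2
    · subst hp2
      rw [if_pos rfl] at hns
      obtain ⟨j, hj, i, hi⟩ := hC.beta_odd
      have hag : ∃ k, α * γ = 2 * k + 1 := by
        rcases two_cases (α * γ) with ⟨k, hk⟩ | h
        · exact absurd (isSquare_of_two _ ⟨i - k, by linear_combination - hi - 4 * hk⟩) hδ
        · exact h
      obtain ⟨k, hk⟩ := hag
      obtain ⟨m, rfl⟩ : ∃ m, d = 8 * m + 3 := by
        obtain ⟨m, hm⟩ := fund_mod4 hd
        push_cast at hpd
        exact ⟨d / 8, by omega⟩
      apply isSquare_of_two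
      refine ⟨(k - i) * (8 * m + 3) + 3 * m + 1, ?_⟩
      push_cast
      linear_combination (8 * (m : ℤ_[2]) + 3) * hi + 4 * (8 * (m : ℤ_[2]) + 3) * hk
    · rw [if_neg hp2] at hns
      replace hns : ¬ legendreSym p (-d) = 1 := hns
      have hdu := (isUnit_intCast (p := p) d).mpr hpd
      apply isSquare_zmod hp2 (hC.1.mul hdu)
      have nz : ∀ z : ℤ_[p], IsUnit z → PadicInt.toZMod z ≠ 0 := by
        intro z hz; rw [Ne, toZMod_eq_zero, ← punit_iff]; exact hz
      have hdne : ((-d : ℤ) : ZMod p) ≠ 0 := by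
        have := nz _ hdu
        simpa using this
      have hc2 : ringChar (ZMod p) ≠ 2 := by rwa [ZMod.ringChar_zmod_n]
      have e1 : quadraticChar (ZMod p) ((-d : ℤ) : ZMod p) = -1 := by
        rcases quadraticChar_dichotomy hdne with h | h
        · exact absurd h hns
        · exact h
      have e2 : quadraticChar (ZMod p) (PadicInt.toZMod (-δ)) = -1 := by
        rcases quadraticChar_dichotomy (nz _ hC.1.neg) with h | h
        · exact absurd (isSquare_zmod hp2 hC.1.neg
            ((quadraticChar_one_iff_isSquare (nz _ hC.1.neg)).mp h)) hδ
        · exact h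
      rw [← quadraticChar_one_iff_isSquare (nz _ (hC.1.mul hdu))]
      have e3 : PadicInt.toZMod (δ * (d : ℤ_[p])) = PadicInt.toZMod (-δ) * ((-d : ℤ) : ZMod p) := by
        simp
      rw [e3, map_mul, e1, e2]
      norm_num

theorem zmod8_b : ∀ s Y D : ZMod 8, D = 5 → s ^ 2 * D = Y ^ 2 → 4 * s = 0 := by decide

theorem local_unram {p : ℕ} (hp : p.Prime) {a b c u v w : ℤ} {n' : ℤ}
    (hN : Nq a b c u v w = p * n') (hn' : ¬ (p : ℤ) ∣ n') {d : ℤ}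
    (hd : IsFundamentalDiscriminant (-d)) :
    haveI : Fact p.Prime := ⟨hp⟩
    ¬ Aniso p a b c u v w →
    ((∃ x1 x2 x3 : ℤ_[p], Fq (a : ℤ_[p]) b c u v w x1 x2 x3 = d) ↔ ¬ InertIn d p hp) := by
  haveI : Fact p.Prime := ⟨hp⟩
  intro ha
  have hpi : Prime (p : ℤ) := Nat.prime_iff_prime_int.mp hp
  have hsq : ¬ (p : ℤ) ^ 2 ∣ Nq a b c u v w := by
    rw [hN, pow_two]
    intro h
    exact hn' ((mul_dvd_mul_iff_left hpi.ne_zero).mp h)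
  rcases core_or (p := p) hsq with ⟨δ, α, β, γ, hC⟩ | ⟨h, -⟩
  swap
  · exact absurd (hN ▸ Dvd.intro _ rfl) h
  obtain ⟨s, hs⟩ : ∃ s, -δ = s ^ 2 := by
    by_contra hns
    exact ha (hC.aniso hN hn' hns)
  have hsu : IsUnit s := by
    have := hC.1.neg
    rw [hs] at this
    exact (isUnit_pow_iff two_ne_zero).mp this
  constructor
  · rintro ⟨x1, x2, x3, hx⟩ hI
    obtain ⟨Y, x, y, hF⟩ := hC.2.2.2.2.1 x1 x2 x3
    set q := α * x ^ 2 + β * x * y + γ * y ^ 2 with hq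
    rw [hx, hN] at hF
    have hF2 : s ^ 2 * (-d : ℤ) - Y ^ 2 = 4 * p * (n' * q) := by
      push_cast at hF ⊢
      rw [← hs]
      linear_combination hF
    unfold InertIn at hI
    by_cases hp2 : p = 2
    · subst hp2
      rw [if_pos rfl] at hI
      have h1 : PadicInt.toZModPow (p := 2) 3 (s ^ 2 * (-d : ℤ) - Y ^ 2) = 0 := by
        rw [toZModPow_eq_zero]
        exact ⟨n' * q, by rw [hF2]; push_cast; ring⟩
      rw [map_sub, map_mul, map_pow, map_pow, sub_eq_zero, map_intCast] at h1
      have h2 := zmod8_b _ _ _ (by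
        have : ((-d : ℤ) : ZMod 8) = ((5 : ℤ) : ZMod 8) := by
          rw [ZMod.intCast_eq_intCast_iff]
          exact hI
        exact_mod_cast this) h1
      have h3 : PadicInt.toZModPow (p := 2) 3 (4 * s) = 0 := by
        rw [map_mul, map_ofNat]; exact h2
      rw [toZModPow_eq_zero] at h3
      obtain ⟨k, hk⟩ := h3
      have h2ne : (2 : ℤ_[2]) ≠ 0 := by exact_mod_cast (PadicInt.prime_p (p := 2)).ne_zero
      rw [punit_iff] at hsu
      apply hsu
      refine ⟨k, ?_⟩
      apply mul_left_cancel₀ (mul_ne_zero h2ne h2ne)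
      push_cast at hk ⊢
      linear_combination hk
    · rw [if_neg hp2] at hI
      have h1 := (legendreSym.eq_neg_one_iff p).mp hI
      apply h1
      obtain ⟨g, hg⟩ := hsu.exists_right_inv
      refine ⟨PadicInt.toZMod (Y * g), ?_⟩
      rw [← map_mul, ← sub_eq_zero, ← map_intCast (PadicInt.toZMod (p := p)), ← map_sub,
        toZMod_eq_zero]
      refine ⟨4 * n' * q * g ^ 2, ?_⟩
      linear_combination g ^ 2 * hF2 - ((-d : ℤ) : ℤ_[p]) * (s * g + 1) * hg
  · intro hI
    by_cases hpd : (p : ℤ) ∣ d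
    · exact hC.ram' hN hn' hd hpd
    suffices ∃ r : ℤ_[p], -(d : ℤ_[p]) = r ^ 2 by
      obtain ⟨r, hr⟩ := this
      apply hC.rep_sq (Y := s * r)
      rw [mul_pow, ← hs, ← hr]; ring
    unfold InertIn at hI
    by_cases hp2 : p = 2
    · subst hp2
      rw [if_pos rfl] at hI
      obtain ⟨m, hm⟩ := fund_mod4 hd
      push_cast at hpd
      exact (split_sq hp (d := d) (by unfold SplitIn; rw [if_pos rfl]; omega)).2
    · rw [if_neg hp2] at hI
      apply (split_sq hp (d := d) _).2
      unfold SplitIn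
      rw [if_neg hp2]
      have hdne : ((-d : ℤ) : ZMod p) ≠ 0 := by
        rw [Ne, ZMod.intCast_zmod_eq_zero_iff_dvd, dvd_neg]
        exact hpd
      rcases quadraticChar_dichotomy hdne with h | h
      · exact h
      · exact absurd h hI

theorem local_good {p : ℕ} [Fact p.Prime] {a b c u v w : ℤ}
    (hN : ¬ (p : ℤ) ∣ Nq a b c u v w) {d : ℤ} (hd : IsFundamentalDiscriminant (-d)) :
    ∃ x1 x2 x3 : ℤ_[p], Fq (a : ℤ_[p]) b c u v w x1 x2 x3 = d := by
  rcases core_or (p := p) (a := a) (b := b) (c := c) (u := u) (v := v) (w := w)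
    (fun h => hN ((dvd_pow_self (p : ℤ) two_ne_zero).trans h)) with
    ⟨δ, α, β, γ, hC⟩ | ⟨-, h⟩
  · exact hC.good hN d (fund_mod4 hd)
  · exact h d

theorem zmod4_b : ∀ s m : ZMod 4, -m = s ^ 2 → m ≠ 1 ∧ m ≠ 2 := by decide

/-- primitivity is automatic -/
theorem prim_of_rep {p : ℕ} [hp : Fact p.Prime] {a b c u v w : ℤ} {d : ℤ}
    (hd : IsFundamentalDiscriminant (-d)) {x1 x2 x3 : ℤ_[p]}
    (h : Fq (a : ℤ_[p]) b c u v w x1 x2 x3 = d) : IsUnit x1 ∨ IsUnit x2 ∨ IsUnit x3 := by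
  by_contra hcon
  push Not at hcon
  rw [punit_iff, punit_iff, punit_iff, not_not, not_not, not_not] at hcon
  obtain ⟨⟨y1, rfl⟩, ⟨y2, rfl⟩, ⟨y3, rfl⟩⟩ := hcon
  have h2 : (d : ℤ_[p]) = p ^ 2 * Fq (a : ℤ_[p]) b c u v w y1 y2 y3 := by
    rw [← h]; unfold Fq; ring
  have h3 : (p : ℤ) ^ 2 ∣ d := by
    rw [← PadicInt.pow_p_dvd_int_iff]; exact ⟨_, h2⟩
  by_cases hp2 : p = 2
  · subst hp2
    have h2ne : (2 : ℤ_[2]) ≠ 0 := by exact_mod_cast (PadicInt.prime_p (p := 2)).ne_zero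
    obtain ⟨m, rfl, hm⟩ := fund_two hd 
      ((dvd_pow_self (2 : ℤ) two_ne_zero).trans (by exact_mod_cast h3))
    have h4 : -(m : ℤ_[2]) = (u * y1 + v * y2 + w * y3) ^ 2 - 4 * (b * c * y1 ^ 2 + a * c * y2 ^ 2
        + a * b * y3 ^ 2 + (v * w - a * u) * y2 * y3 + (u * w - b * v) * y1 * y3
        + (u * v - c * w) * y1 * y2) := by
      apply mul_left_cancel₀ (mul_ne_zero h2ne h2ne)
      unfold Fq at h2
      push_cast at h2
      linear_combination -h2
    have h5 := congrArg (PadicInt.toZModPow (p := 2) 2) h4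
    rw [map_neg, map_sub, map_mul, map_ofNat, map_pow, map_intCast] at h5
    have h6 := zmod4_b (PadicInt.toZModPow (p := 2) 2 (u * y1 + v * y2 + w * y3)) (m : ZMod 4) (by
      have e : (4 : ZMod 4) = 0 := by decide
      refine h5.trans ?_
      change _ - (4 : ZMod 4) * _ = _
      rw [e, zero_mul, sub_zero])
    rcases hm with hm | hm
    · apply h6.2
      have : (m : ZMod 4) = ((2 : ℤ) : ZMod 4) := by
        rw [ZMod.intCast_eq_intCast_iff]; exact hm
      exact_mod_cast this
    · apply h6.1
      have : (m : ZMod 4) = ((1 : ℤ) : ZMod 4) := by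
        rw [ZMod.intCast_eq_intCast_iff]; exact hm
      exact_mod_cast this
  · rw [pow_two] at h3
    exact fund_odd hd hp.out hp2 h3


theorem quat_div_iff {F : Type*} [Field F] (a b : F) :
    (∀ x : ℍ[F, a, b], x ≠ 0 → IsUnit x) ↔
      ∀ q0 q1 q2 q3 : F, q0 ^ 2 - a * q1 ^ 2 - b * q2 ^ 2 + a * b * q3 ^ 2 = 0 →
        q0 = 0 ∧ q1 = 0 ∧ q2 = 0 ∧ q3 = 0 := by
  have key : ∀ q : ℍ[F, a, b], (q * star q).re =
      q.re ^ 2 - a * q.imI ^ 2 - b * q.imJ ^ 2 + a * b * q.imK ^ 2 := by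
    intro q
    simp [QuaternionAlgebra.re_mul]
    ring
  constructor
  · intro h q0 q1 q2 q3 hq
    by_contra hne
    set q : ℍ[F, a, b] := ⟨q0, q1, q2, q3⟩ with hqdef
    have hq0 : q ≠ 0 := by
      intro h0
      apply hne
      refine ⟨congrArg QuaternionAlgebra.re h0, congrArg QuaternionAlgebra.imI h0,
        congrArg QuaternionAlgebra.imJ h0, congrArg QuaternionAlgebra.imK h0⟩
    have hu := h q hq0
    have hz : q * star q = 0 := by
      rw [QuaternionAlgebra.mul_star_eq_coe, key q]
      change ((q0 ^ 2 - a * q1 ^ 2 - b * q2 ^ 2 + a * b * q3 ^ 2 : F) : ℍ[F, a, b]) = 0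
      rw [hq, QuaternionAlgebra.coe_zero]
    rw [hu.mul_right_eq_zero] at hz
    exact hq0 (star_eq_zero.mp hz)
  · intro h q hq
    have hn : (q * star q).re ≠ 0 := by
      intro h0
      rw [key] at h0
      obtain ⟨h1, h2, h3, h4⟩ := h _ _ _ _ h0
      exact hq (QuaternionAlgebra.ext h1 h2 h3 h4)
    have e1 := QuaternionAlgebra.mul_star_eq_coe q
    have e2 := QuaternionAlgebra.star_mul_eq_coe q
    have e3 : (star q * q).re = (q * star q).re := by
      rw [← star_comm_self' q]
    refine ⟨⟨q, ((q * star q).re)⁻¹ • star q, ?_, ?_⟩, rfl⟩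
    · rw [mul_smul_comm, e1, QuaternionAlgebra.re_coe, QuaternionAlgebra.smul_coe,
        inv_mul_cancel₀ hn, QuaternionAlgebra.coe_one]
    · rw [smul_mul_assoc, e2, e3, QuaternionAlgebra.smul_coe, inv_mul_cancel₀ hn,
        QuaternionAlgebra.coe_one]

theorem ram_aniso_field {F : Type*} [Field F] {a b x1 y1 z1 x2 y2 z2 x3 y3 z3 : F} {A B C u v w : F}
    (h11 : -a * x1 * x1 - b * y1 * y1 + a * b * z1 * z1 = 4 * B * C - u ^ 2)
    (h22 : -a * x2 * x2 - b * y2 * y2 + a * b * z2 * z2 = 4 * A * C - v ^ 2)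
    (h33 : -a * x3 * x3 - b * y3 * y3 + a * b * z3 * z3 = 4 * A * B - w ^ 2)
    (h23 : -a * x2 * x3 - b * y2 * y3 + a * b * z2 * z3 = v * w - 2 * A * u)
    (h13 : -a * x1 * x3 - b * y1 * y3 + a * b * z1 * z3 = u * w - 2 * B * v)
    (h12 : -a * x1 * x2 - b * y1 * y2 + a * b * z1 * z2 = u * v - 2 * C * w)
    (hdet : x1 * (y2 * z3 - z2 * y3) + x2 * (y3 * z1 - z3 * y1) + x3 * (y1 * z2 - z1 * y2) ≠ 0) :
    (∀ q0 q1 q2 q3 : F, q0 ^ 2 - a * q1 ^ 2 - b * q2 ^ 2 + a * b * q3 ^ 2 = 0 →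
        q0 = 0 ∧ q1 = 0 ∧ q2 = 0 ∧ q3 = 0) ↔
    ∀ t X Y Z : F, t ^ 2 + Fq A B C u v w X Y Z = 0 → t = 0 ∧ X = 0 ∧ Y = 0 ∧ Z = 0 := by
  have key : ∀ t X Y Z : F, t ^ 2 + Fq A B C u v w X Y Z =
      t ^ 2 - a * (X * x1 + Y * x2 + Z * x3) ^ 2 - b * (X * y1 + Y * y2 + Z * y3) ^ 2
        + a * b * (X * z1 + Y * z2 + Z * z3) ^ 2 := by
    intro t X Y Z
    unfold Fq
    linear_combination -X ^ 2 * h11 - Y ^ 2 * h22 - Z ^ 2 * h33 - 2 * Y * Z * h23 - 2 * X * Z * h13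
      - 2 * X * Y * h12
  set D := x1 * (y2 * z3 - z2 * y3) + x2 * (y3 * z1 - z3 * y1) + x3 * (y1 * z2 - z1 * y2) with hD
  constructor
  · intro h t X Y Z hz
    rw [key] at hz
    obtain ⟨h0, h1, h2, h3⟩ := h _ _ _ _ hz
    refine ⟨h0, ?_, ?_, ?_⟩
    · apply (mul_eq_zero.mp (_ : D * X = 0)).resolve_left hdet
      linear_combination (y2 * z3 - z2 * y3) * h1 + (z2 * x3 - x2 * z3) * h2
        + (x2 * y3 - y2 * x3) * h3
    · apply (mul_eq_zero.mp (_ : D * Y = 0)).resolve_left hdet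
      linear_combination (y3 * z1 - z3 * y1) * h1 + (z3 * x1 - x3 * z1) * h2
        + (x3 * y1 - y3 * x1) * h3
    · apply (mul_eq_zero.mp (_ : D * Z = 0)).resolve_left hdet
      linear_combination (y1 * z2 - z1 * y2) * h1 + (z1 * x2 - x1 * z2) * h2
        + (x1 * y2 - y1 * x2) * h3
  · intro h q0 q1 q2 q3 hq
    have := h (D * q0) ((y2 * z3 - z2 * y3) * q1 + (z2 * x3 - x2 * z3) * q2
        + (x2 * y3 - y2 * x3) * q3) ((y3 * z1 - z3 * y1) * q1 + (z3 * x1 - x3 * z1) * q2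
        + (x3 * y1 - y3 * x1) * q3) ((y1 * z2 - z1 * y2) * q1 + (z1 * x2 - x1 * z2) * q2
        + (x1 * y2 - y1 * x2) * q3) (by
          rw [key]
          linear_combination D ^ 2 * hq)
    obtain ⟨h0, h1, h2, h3⟩ := this
    refine ⟨(mul_eq_zero.mp h0).resolve_left hdet, ?_, ?_, ?_⟩
    · apply (mul_eq_zero.mp (_ : D * q1 = 0)).resolve_left hdet
      linear_combination x1 * h1 + x2 * h2 + x3 * h3
    · apply (mul_eq_zero.mp (_ : D * q2 = 0)).resolve_left hdet
      linear_combination y1 * h1 + y2 * h2 + y3 * h3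
    · apply (mul_eq_zero.mp (_ : D * q3 = 0)).resolve_left hdet
      linear_combination z1 * h1 + z2 * h2 + z3 * h3

theorem ram_aniso {p : ℕ} (hp : p.Prime) {a b x1 y1 z1 x2 y2 z2 x3 y3 z3 : ℚ} {A B C u v w : ℤ}
    (h11 : -a * x1 * x1 - b * y1 * y1 + a * b * z1 * z1 = 4 * B * C - u ^ 2)
    (h22 : -a * x2 * x2 - b * y2 * y2 + a * b * z2 * z2 = 4 * A * C - v ^ 2)
    (h33 : -a * x3 * x3 - b * y3 * y3 + a * b * z3 * z3 = 4 * A * B - w ^ 2)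
    (h23 : -a * x2 * x3 - b * y2 * y3 + a * b * z2 * z3 = v * w - 2 * A * u)
    (h13 : -a * x1 * x3 - b * y1 * y3 + a * b * z1 * z3 = u * w - 2 * B * v)
    (h12 : -a * x1 * x2 - b * y1 * y2 + a * b * z1 * z2 = u * v - 2 * C * w)
    (hdet : x1 * (y2 * z3 - z2 * y3) + x2 * (y3 * z1 - z3 * y1) + x3 * (y1 * z2 - z1 * y2) ≠ 0) :
    haveI : Fact p.Prime := ⟨hp⟩
    RamifiedAt a b p hp ↔ Aniso p A B C u v w := by
  have : Fact p.Prime := ⟨hp⟩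
  unfold RamifiedAt Aniso
  refine (quat_div_iff (a : ℚ_[p]) (b : ℚ_[p])).trans ?_
  have c := fun x y : ℚ => congrArg (fun q : ℚ => (q : ℚ_[p])) (a₁ := x) (a₂ := y)
  apply ram_aniso_field (F := ℚ_[p]) (x1 := x1) (y1 := y1) (z1 := z1) (x2 := x2) (y2 := y2) (z2 := z2)
    (x3 := x3) (y3 := y3) (z3 := z3)
  · have := c _ _ h11; push_cast at this; exact this
  · have := c _ _ h22; push_cast at this; exact this
  · have := c _ _ h33; push_cast at this; exact this
  · have := c _ _ h23; push_cast at this; exact this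
  · have := c _ _ h13; push_cast at this; exact this
  · have := c _ _ h12; push_cast at this; exact this
  · exact_mod_cast hdet

theorem adj_of_rel {a b : ℚ} {F K : Matrix (Fin 3) (Fin 3) ℚ}
    (hτ : a * b * F.det ≠ 0)
    (h0 : ∀ s, (K * F) s 0 = -b * (F (s + 1) 1 * F (s + 2) 2 - F (s + 1) 2 * F (s + 2) 1))
    (h1 : ∀ s, (K * F) s 1 = -a * (F (s + 1) 2 * F (s + 2) 0 - F (s + 1) 0 * F (s + 2) 2))
    (h2 : ∀ s, (K * F) s 2 = F (s + 1) 0 * F (s + 2) 1 - F (s + 1) 1 * F (s + 2) 0) :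
    Kᵀ = K ∧ K.det = a * b * F.det ∧ F * Matrix.diagonal ![-a, -b, a * b] * Fᵀ = K.adjugate := by
  set τ := a * b * F.det with hτdef
  set E := Matrix.diagonal ![-a, -b, a * b] with hE
  set M := F * E * Fᵀ with hM
  have hKM : K * M = τ • (1 : Matrix (Fin 3) (Fin 3) ℚ) := by
    have : K * M = (K * F) * E * Fᵀ := by simp only [hM, Matrix.mul_assoc]
    rw [this]
    have hKF : K * F = Matrix.of (fun s j => ![-b * (F (s + 1) 1 * F (s + 2) 2 - F (s + 1) 2 * F (s + 2) 1),
        -a * (F (s + 1) 2 * F (s + 2) 0 - F (s + 1) 0 * F (s + 2) 2),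
        F (s + 1) 0 * F (s + 2) 1 - F (s + 1) 1 * F (s + 2) 0] j) := by
      ext s j
      fin_cases j
      · exact h0 s
      · exact h1 s
      · exact h2 s
    rw [hKF, hτdef, Matrix.det_fin_three]
    ext s t
    fin_cases s <;> fin_cases t <;>
      simp [hE, Matrix.mul_apply, Fin.sum_univ_three] <;> ring
  have hdM : M.det = τ ^ 2 := by
    rw [hM, Matrix.det_mul, Matrix.det_mul, Matrix.det_transpose, hE, Matrix.det_diagonal,
      Fin.prod_univ_three]
    simp [hτdef]
    ring
  have hMs : Mᵀ = M := by
    rw [hM, Matrix.transpose_mul, Matrix.transpose_mul, Matrix.transpose_transpose, hE,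
      Matrix.diagonal_transpose, Matrix.mul_assoc]
  have hdK : K.det = τ := by
    have := congrArg Matrix.det hKM
    rw [Matrix.det_mul, hdM, Matrix.det_smul, Matrix.det_one, Fintype.card_fin] at this
    have h2 : τ ^ 2 ≠ 0 := pow_ne_zero _ hτ
    apply mul_right_cancel₀ h2
    rw [this]; ring
  have hadj : M = K.adjugate := by
    have e1 := Matrix.adjugate_mul K
    have e2 : K.adjugate * K * M = τ • M := by rw [e1, hdK, smul_mul_assoc, one_mul]
    rw [Matrix.mul_assoc, hKM, mul_smul_comm, mul_one] at e2
    exact (smul_right_injective _ hτ e2).symm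
  refine ⟨?_, hdK, hadj⟩
  have e3 : M * Kᵀ = τ • (1 : Matrix (Fin 3) (Fin 3) ℚ) := by
    have := congrArg Matrix.transpose hKM
    rw [Matrix.transpose_mul, hMs, Matrix.transpose_smul, Matrix.transpose_one] at this
    exact this
  have e4 : K * M * Kᵀ = τ • Kᵀ := by rw [hKM, smul_mul_assoc, one_mul]
  rw [Matrix.mul_assoc, e3, mul_smul_comm, mul_one] at e4
  exact (smul_right_injective _ hτ e4).symm


/-- the ternary lattice of an order, as a submodule -/
def Lsub {a b : ℚ} (O : Submodule ℤ ℍ[ℚ, a, b]) : Submodule ℤ ℍ[ℚ, a, b] where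
  carrier := {x | (∃ m : ℤ, ∃ r ∈ O, x = m • (1 : ℍ[ℚ, a, b]) + 2 • r) ∧ x + star x = 0}
  add_mem' := by
    rintro x y ⟨⟨m, r, hr, rfl⟩, h1⟩ ⟨⟨m', r', hr', rfl⟩, h2⟩
    refine ⟨⟨m + m', r + r', O.add_mem hr hr', ?_⟩, ?_⟩
    · rw [add_smul, smul_add]; abel
    · rw [star_add, add_add_add_comm, h1, h2, add_zero]
  zero_mem' := ⟨⟨0, 0, O.zero_mem, by simp⟩, by simp⟩
  smul_mem' := by
    rintro c x ⟨⟨m, r, hr, rfl⟩, h1⟩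
    refine ⟨⟨c * m, c • r, O.smul_mem c hr, ?_⟩, ?_⟩
    · rw [smul_add, mul_smul, smul_comm c 2 r]
    · rw [star_zsmul, ← smul_add, h1, smul_zero]

theorem nrd_eq {a b : ℚ} (q : ℍ[ℚ, a, b]) : nrd q =
    q.re ^ 2 - a * q.imI ^ 2 - b * q.imJ ^ 2 + a * b * q.imK ^ 2 := by
  unfold nrd
  simp [QuaternionAlgebra.re_mul]
  ring

theorem qbil_eq {a b : ℚ} (x y : ℍ[ℚ, a, b]) : qbil x y =
    2 * (x.re * y.re - a * x.imI * y.imI - b * x.imJ * y.imJ + a * b * x.imK * y.imK) := by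
  unfold qbil
  simp [QuaternionAlgebra.re_mul]
  ring

theorem re_zero_of {a b : ℚ} {x : ℍ[ℚ, a, b]} (h : x + star x = 0) : x.re = 0 := by
  have := congrArg QuaternionAlgebra.re h
  simp at this
  exact this

theorem z_re {a b : ℚ} (n : ℤ) (q : ℍ[ℚ, a, b]) : (n • q).re = n * q.re := by
  rw [QuaternionAlgebra.re_smul, zsmul_eq_mul]

theorem z_imI {a b : ℚ} (n : ℤ) (q : ℍ[ℚ, a, b]) : (n • q).imI = n * q.imI := by
  rw [QuaternionAlgebra.imI_smul, zsmul_eq_mul]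

theorem z_imJ {a b : ℚ} (n : ℤ) (q : ℍ[ℚ, a, b]) : (n • q).imJ = n * q.imJ := by
  rw [QuaternionAlgebra.imJ_smul, zsmul_eq_mul]

theorem z_imK {a b : ℚ} (n : ℤ) (q : ℍ[ℚ, a, b]) : (n • q).imK = n * q.imK := by
  rw [QuaternionAlgebra.imK_smul, zsmul_eq_mul]

theorem trace_int {a b : ℚ} {O : Submodule ℤ ℍ[ℚ, a, b]} (h1 : 1 ∈ O)
    (hnrd : ∀ x ∈ O, ∃ m : ℤ, nrd x = m) {x : ℍ[ℚ, a, b]} (hx : x ∈ O) :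
    ∃ m : ℤ, 2 * x.re = m := by
  obtain ⟨k, hk⟩ := hnrd _ hx
  obtain ⟨l, hl⟩ := hnrd _ (O.add_mem hx h1)
  refine ⟨l - k - 1, ?_⟩
  rw [nrd_eq] at hk hl
  simp at hl
  push_cast
  linear_combination hl - hk

theorem mem_Lsub {a b : ℚ} {O : Submodule ℤ ℍ[ℚ, a, b]} {x : ℍ[ℚ, a, b]} (hx : x ∈ O) {m : ℤ}
    (hm : 2 * x.re = m) : (-m) • (1 : ℍ[ℚ, a, b]) + 2 • x ∈ Lsub O := by
  refine ⟨⟨-m, x, hx, rfl⟩, ?_⟩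
  rw [two_nsmul]
  ext <;> simp
  linear_combination hm

/-- `1, r₁, r₂, r₃` generate the order. -/
theorem gen_of {a b : ℚ} {O : Submodule ℤ ℍ[ℚ, a, b]} (h1 : 1 ∈ O)
    (hnrd : ∀ x ∈ O, ∃ m : ℤ, nrd x = m) {f r : Fin 3 → ℍ[ℚ, a, b]} {m : Fin 3 → ℤ}
    (hspan : Submodule.span ℤ (Set.range f) = Lsub O) (hr : ∀ k, r k ∈ O)
    (hf : ∀ k, f k = m k • (1 : ℍ[ℚ, a, b]) + 2 • r k) {x : ℍ[ℚ, a, b]} (hx : x ∈ O) :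
    ∃ (e : ℤ) (n : Fin 3 → ℤ), x = e • (1 : ℍ[ℚ, a, b]) + ∑ k, n k • r k := by
  obtain ⟨t, ht⟩ := trace_int h1 hnrd hx
  have hL := mem_Lsub hx ht
  rw [← hspan, Submodule.mem_span_range_iff_exists_fun] at hL
  obtain ⟨n, hn⟩ := hL
  set y := x - ∑ k, n k • r k with hy
  have hyO : y ∈ O := O.sub_mem hx (O.sum_mem fun k _ => O.smul_mem _ (hr k))
  have h2y : 2 • y = (∑ k, n k * m k + t) • (1 : ℍ[ℚ, a, b]) := by
    have : ∑ k, n k • f k = (∑ k, n k * m k) • (1 : ℍ[ℚ, a, b]) + 2 • ∑ k, n k • r k := by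
      rw [Finset.sum_smul, Finset.smul_sum, ← Finset.sum_add_distrib]
      refine Finset.sum_congr rfl fun k _ => ?_
      rw [hf k, smul_add, mul_smul, smul_comm (n k) 2]
    rw [this] at hn
    rw [hy, smul_sub, add_smul, sub_eq_iff_eq_add]
    rw [add_right_comm, hn, neg_smul]
    abel
  obtain ⟨l, hl⟩ := hnrd _ hyO
  set s := ∑ k, n k * m k + t with hs
  have g0 : 2 * y.re = s := by
    have := congrArg QuaternionAlgebra.re h2y
    rw [two_nsmul, z_re] at this
    simp at this
    linarith
  have g1 : y.imI = 0 := by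
    have := congrArg QuaternionAlgebra.imI h2y
    rw [two_nsmul, z_imI] at this
    simp at this
    linarith
  have g2 : y.imJ = 0 := by
    have := congrArg QuaternionAlgebra.imJ h2y
    rw [two_nsmul, z_imJ] at this
    simp at this
    linarith
  have g3 : y.imK = 0 := by
    have := congrArg QuaternionAlgebra.imK h2y
    rw [two_nsmul, z_imK] at this
    simp at this
    linarith
  rw [nrd_eq, g1, g2, g3] at hl
  have hsq : s ^ 2 = 4 * l := by
    have : (s : ℚ) ^ 2 = 4 * l := by rw [← g0]; linear_combination 4 * hl
    exact_mod_cast this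
  obtain ⟨e, he⟩ : ∃ e, s = 2 * e := by
    have h2 : (2 : ℤ) ∣ s ^ 2 := ⟨2 * l, by rw [hsq]; ring⟩
    exact Int.prime_two.dvd_of_dvd_pow h2
  refine ⟨e, n, ?_⟩
  rw [← sub_eq_iff_eq_add, ← hy]
  have g0' : y.re = e := by
    rw [he] at g0; push_cast at g0; linarith
  ext
  · simpa using g0'
  · simpa using g1
  · simpa using g2
  · simpa using g3

/-- coordinates -/
def Cmat {a b : ℚ} {n : ℕ} (v : Fin n → ℍ[ℚ, a, b]) : Matrix (Fin n) (Fin 4) ℚ :=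
  Matrix.of fun i => ![(v i).re, (v i).imI, (v i).imJ, (v i).imK]

theorem Cmat_comb {a b : ℚ} {n m : ℕ} {v : Fin n → ℍ[ℚ, a, b]} {w : Fin m → ℍ[ℚ, a, b]}
    {U : Matrix (Fin m) (Fin n) ℤ} (h : ∀ i, ∑ j, U i j • v j = w i) :
    Cmat w = U.map (Int.cast : ℤ → ℚ) * Cmat v := by
  ext i k
  rw [Matrix.mul_apply]
  simp only [Cmat, Matrix.of_apply, Matrix.map_apply]
  rw [← h i]
  have e0 := map_sum (QuaternionAlgebra.reₗ (R := ℚ) a 0 b) (fun j => U i j • v j) Finset.univ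
  have e1 := map_sum (QuaternionAlgebra.imIₗ (R := ℚ) a 0 b) (fun j => U i j • v j) Finset.univ
  have e2 := map_sum (QuaternionAlgebra.imJₗ (R := ℚ) a 0 b) (fun j => U i j • v j) Finset.univ
  have e3 := map_sum (QuaternionAlgebra.imKₗ (R := ℚ) a 0 b) (fun j => U i j • v j) Finset.univ
  fin_cases k
  · refine e0.trans (Finset.sum_congr rfl fun j _ => z_re _ _)
  · refine e1.trans (Finset.sum_congr rfl fun j _ => z_imI _ _)
  · refine e2.trans (Finset.sum_congr rfl fun j _ => z_imJ _ _)
  · refine e3.trans (Finset.sum_congr rfl fun j _ => z_imK _ _)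

theorem gram_det {a b : ℚ} {v : Fin 4 → ℍ[ℚ, a, b]} {A : Matrix (Fin 4) (Fin 4) ℤ}
    (h : ∀ i j, (A i j : ℚ) = qbil (v i) (v j)) :
    (A.det : ℚ) = 16 * a ^ 2 * b ^ 2 * (Cmat v).det ^ 2 := by
  have : A.map (Int.cast : ℤ → ℚ) =
      Cmat v * Matrix.diagonal ![2, -2 * a, -2 * b, 2 * a * b] * (Cmat v)ᵀ := by
    ext i j
    rw [Matrix.map_apply, h, qbil_eq]
    simp [Cmat, Matrix.mul_apply, Fin.sum_univ_four, Matrix.diagonal_apply]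
    ring
  have h2 := congrArg Matrix.det this
  rw [Matrix.det_mul, Matrix.det_mul, Matrix.det_transpose, Matrix.det_diagonal,
    Fin.prod_univ_four] at h2
  have h3 : (A.map (Int.cast : ℤ → ℚ)).det = (A.det : ℚ) := (Int.cast_det A).symm
  rw [← h3, h2]
  simp
  ring

theorem det_sq_eq {a b : ℚ} {v w : Fin 4 → ℍ[ℚ, a, b]}
    (h : Submodule.span ℤ (Set.range v) = Submodule.span ℤ (Set.range w)) :
    (Cmat v).det ^ 2 = (Cmat w).det ^ 2 := by
  have h1 : ∀ i, ∃ c : Fin 4 → ℤ, ∑ j, c j • v j = w i := fun i =>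
    (Submodule.mem_span_range_iff_exists_fun ℤ).mp
      (h ▸ Submodule.subset_span ⟨i, rfl⟩)
  have h2 : ∀ i, ∃ c : Fin 4 → ℤ, ∑ j, c j • w j = v i := fun i =>
    (Submodule.mem_span_range_iff_exists_fun ℤ).mp
      (h ▸ Submodule.subset_span ⟨i, rfl⟩)
  choose U hU using h1
  choose V hV using h2
  have e1 := congrArg Matrix.det (Cmat_comb (U := U) hU)
  have e2 := congrArg Matrix.det (Cmat_comb (U := V) hV)
  rw [Matrix.det_mul] at e1 e2
  have c1 : ((Matrix.map U (Int.cast : ℤ → ℚ)).det) = ((Matrix.det U : ℤ) : ℚ) :=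
    (Int.cast_det _).symm
  have c2 : ((Matrix.map V (Int.cast : ℤ → ℚ)).det) = ((Matrix.det V : ℤ) : ℚ) :=
    (Int.cast_det _).symm
  rw [c1] at e1
  rw [c2] at e2
  by_cases h0 : (Cmat v).det = 0
  · rw [e1, h0, mul_zero]
  · have : ((Matrix.det V * Matrix.det U : ℤ) : ℚ) = 1 := by
      apply mul_right_cancel₀ h0
      push_cast
      rw [mul_assoc, ← e1, ← e2, one_mul]
    have h3 : Matrix.det V * Matrix.det U = 1 := by exact_mod_cast this
    rw [e1, mul_pow]
    have h4 : (Matrix.det U) ^ 2 = 1 := by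
      rcases Int.eq_one_or_neg_one_of_mul_eq_one' h3 with ⟨-, h⟩ | ⟨-, h⟩ <;> rw [h] <;> norm_num
    have h5 : ((Matrix.det U : ℤ) : ℚ) ^ 2 = 1 := by exact_mod_cast h4
    rw [h5, one_mul]


/-- coordinates of pure quaternions -/
def Fmat {a b : ℚ} (f : Fin 3 → ℍ[ℚ, a, b]) : Matrix (Fin 3) (Fin 3) ℚ :=
  Matrix.of fun i => ![(f i).imI, (f i).imJ, (f i).imK]

theorem span_cons {a b : ℚ} {O : Submodule ℤ ℍ[ℚ, a, b]} (h1 : 1 ∈ O)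
    (hnrd : ∀ x ∈ O, ∃ m : ℤ, nrd x = m) {f r : Fin 3 → ℍ[ℚ, a, b]} {m : Fin 3 → ℤ}
    (hspan : Submodule.span ℤ (Set.range f) = Lsub O) (hr : ∀ k, r k ∈ O)
    (hf : ∀ k, f k = m k • (1 : ℍ[ℚ, a, b]) + 2 • r k) :
    Submodule.span ℤ (Set.range ![1, r 0, r 1, r 2]) = O := by
  apply le_antisymm
  · rw [Submodule.span_le]
    rintro _ ⟨k, rfl⟩
    fin_cases k
    · exact h1
    · exact hr 0
    · exact hr 1
    · exact hr 2
  · intro x hx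
    obtain ⟨e, n, rfl⟩ := gen_of h1 hnrd hspan hr hf hx
    rw [Submodule.mem_span_range_iff_exists_fun]
    refine ⟨![e, n 0, n 1, n 2], ?_⟩
    rw [Fin.sum_univ_four, Fin.sum_univ_three]
    simp only [Matrix.cons_val]
    abel

theorem det_cons {a b : ℚ} {f r : Fin 3 → ℍ[ℚ, a, b]}
    (hI : ∀ k, (f k).imI = 2 * (r k).imI) (hJ : ∀ k, (f k).imJ = 2 * (r k).imJ)
    (hK : ∀ k, (f k).imK = 2 * (r k).imK) :
    (Fmat f).det = 8 * (Cmat ![1, r 0, r 1, r 2]).det := by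
  rw [Matrix.det_fin_three, Matrix.det_succ_row_zero, Fin.sum_univ_four]
  simp only [Matrix.det_fin_three]
  simp [Cmat, Fmat, hI, hJ, hK, Fin.succAbove]
  ring

theorem frame {a b : ℚ} {O : Submodule ℤ ℍ[ℚ, a, b]} (h1 : 1 ∈ O)
    (hmul : ∀ x ∈ O, ∀ y ∈ O, x * y ∈ O)
    (hnrd : ∀ x ∈ O, ∃ m : ℤ, nrd x = m) {N : ℕ} (hN : 0 < N) (hdisc : HasReducedDiscriminant O N)
    {f : Fin 3 → ℍ[ℚ, a, b]} (hspan : Submodule.span ℤ (Set.range f) = Lsub O) :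
    (∀ k, (f k).re = 0) ∧ (Fmat f).det ≠ 0 ∧ ∃ A B C u v w : ℤ, (Nq A B C u v w) ^ 2 = (N : ℤ) ^ 2 ∧
      Fmat f * Matrix.diagonal ![-a, -b, a * b] * (Fmat f)ᵀ =
        (!![2 * (A : ℚ), w, v; (w : ℚ), 2 * (B : ℚ), u; (v : ℚ), u, 2 * (C : ℚ)]).adjugate := by
  have hmem : ∀ k, f k ∈ Lsub O := fun k => hspan ▸ Submodule.subset_span ⟨k, rfl⟩
  have hre : ∀ k, (f k).re = 0 := fun k => re_zero_of (hmem k).2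
  have hex : ∀ k, ∃ (m : ℤ) (r : ℍ[ℚ, a, b]), r ∈ O ∧ f k = m • (1 : ℍ[ℚ, a, b]) + 2 • r := by
    intro k
    obtain ⟨m, r, hr, h⟩ := (hmem k).1
    exact ⟨m, r, hr, h⟩
  choose m r hr hf using hex
  have hR : ∀ k, (m k : ℚ) + 2 * (r k).re = 0 := by
    intro k
    have := congrArg QuaternionAlgebra.re (hf k)
    rw [hre, two_nsmul] at this
    simp at this
    linarith
  have hI : ∀ k, (f k).imI = 2 * (r k).imI := by
    intro k
    rw [hf k, two_nsmul]
    simp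
    ring
  have hJ : ∀ k, (f k).imJ = 2 * (r k).imJ := by
    intro k
    rw [hf k, two_nsmul]
    simp
    ring
  have hK : ∀ k, (f k).imK = 2 * (r k).imK := by
    intro k
    rw [hf k, two_nsmul]
    simp
    ring
  -- determinant
  obtain ⟨A4, ⟨v4, -, hv4, hA4⟩, hdet4⟩ := hdisc
  rw [Submodule.span_eq] at hv4
  have hsq := det_sq_eq (hv4.trans (span_cons h1 hnrd hspan hr hf).symm)
  have hg := gram_det hA4
  have hτ2 : (a * b * (Fmat f).det) ^ 2 = 4 * (N : ℚ) ^ 2 := by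
    rw [det_cons hI hJ hK]
    rw [hsq, hdet4] at hg
    push_cast at hg
    linear_combination -4 * hg
  have hN0 : (N : ℚ) ≠ 0 := by exact_mod_cast hN.ne'
  have hτ : a * b * (Fmat f).det ≠ 0 := by
    intro h
    rw [h] at hτ2
    have : (N : ℚ) ^ 2 ≠ 0 := pow_ne_zero _ hN0
    apply this
    linarith
  refine ⟨hre, right_ne_zero_of_mul hτ, ?_⟩
  -- structure constants
  have hprod : ∀ s : Fin 3, ∃ (e : ℤ) (n : Fin 3 → ℤ),
      r (s + 1) * r (s + 2) = e • (1 : ℍ[ℚ, a, b]) + ∑ k, n k • r k := fun s =>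
    gen_of h1 hnrd hspan hr hf (hmul _ (hr _) _ (hr _))
  choose e n hn using hprod
  set K : Matrix (Fin 3) (Fin 3) ℤ := Matrix.of fun s k =>
    2 * n s k + (if k = s + 1 then m (s + 2) else 0) + (if k = s + 2 then m (s + 1) else 0) with hKdef
  have hKF : ∀ s (g : Fin 3 → ℚ), ∑ k, (K s k : ℚ) * (2 * g k) =
      4 * (∑ k, (n s k : ℚ) * g k) + 2 * m (s + 2) * g (s + 1) + 2 * m (s + 1) * g (s + 2) := by
    intro s g
    fin_cases s <;> simp [hKdef, Fin.sum_univ_three] <;> ring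
  have hmain := adj_of_rel (a := a) (b := b) (F := Fmat f) (K := K.map (Int.cast : ℤ → ℚ)) hτ
    (by
      intro s
      have h := congrArg QuaternionAlgebra.imI (hn s)
      rw [QuaternionAlgebra.imI_add, z_imI, Fin.sum_univ_three, QuaternionAlgebra.imI_add,
        QuaternionAlgebra.imI_add, z_imI, z_imI, z_imI] at h
      simp at h
      have hk := hKF s (fun k => (r k).imI)
      rw [Matrix.mul_apply]
      simp only [Fmat, Matrix.map_apply, Matrix.of_apply, Matrix.cons_val, hI, hJ, hK]
      rw [hk, Fin.sum_univ_three]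
      linear_combination -4 * h + 2 * (r (s + 2)).imI * hR (s + 1) + 2 * (r (s + 1)).imI * hR (s + 2))
    (by
      intro s
      have h := congrArg QuaternionAlgebra.imJ (hn s)
      rw [QuaternionAlgebra.imJ_add, z_imJ, Fin.sum_univ_three, QuaternionAlgebra.imJ_add,
        QuaternionAlgebra.imJ_add, z_imJ, z_imJ, z_imJ] at h
      simp at h
      have hk := hKF s (fun k => (r k).imJ)
      rw [Matrix.mul_apply]
      simp only [Fmat, Matrix.map_apply, Matrix.of_apply, Matrix.cons_val, hI, hJ, hK]
      rw [hk, Fin.sum_univ_three]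
      linear_combination -4 * h + 2 * (r (s + 2)).imJ * hR (s + 1) + 2 * (r (s + 1)).imJ * hR (s + 2))
    (by
      intro s
      have h := congrArg QuaternionAlgebra.imK (hn s)
      rw [QuaternionAlgebra.imK_add, z_imK, Fin.sum_univ_three, QuaternionAlgebra.imK_add,
        QuaternionAlgebra.imK_add, z_imK, z_imK, z_imK] at h
      simp at h
      have hk := hKF s (fun k => (r k).imK)
      rw [Matrix.mul_apply]
      simp only [Fmat, Matrix.map_apply, Matrix.of_apply, Matrix.cons_val, hI, hJ, hK]
      rw [hk, Fin.sum_univ_three]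
      linear_combination -4 * h + 2 * (r (s + 2)).imK * hR (s + 1) + 2 * (r (s + 1)).imK * hR (s + 2))
  obtain ⟨hsym, hdK, hadj⟩ := hmain
  have hs : ∀ i j, K i j = K j i := by
    intro i j
    have := congrFun (congrFun hsym j) i
    rw [Matrix.transpose_apply, Matrix.map_apply, Matrix.map_apply] at this
    exact_mod_cast this
  have d0 : K 0 0 = 2 * n 0 0 := by simp [hKdef]
  have d1 : K 1 1 = 2 * n 1 1 := by simp [hKdef]
  have d2 : K 2 2 = 2 * n 2 2 := by simp [hKdef]
  have hKeq : K.map (Int.cast : ℤ → ℚ) = !![2 * ((n 0 0 : ℤ) : ℚ), K 0 1, K 0 2;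
      (K 0 1 : ℚ), 2 * ((n 1 1 : ℤ) : ℚ), K 1 2; (K 0 2 : ℚ), K 1 2, 2 * ((n 2 2 : ℤ) : ℚ)] := by
    ext i j
    fin_cases i <;> fin_cases j <;> simp [d0, d1, d2, hs 1 0, hs 2 0, hs 2 1]
  refine ⟨n 0 0, n 1 1, n 2 2, K 1 2, K 0 2, K 0 1, ?_, ?_⟩
  · have h4 : (2 * (Nq (n 0 0) (n 1 1) (n 2 2) (K 1 2) (K 0 2) (K 0 1) : ℤ) : ℚ) =
        a * b * (Fmat f).det := by
      rw [← hdK, hKeq, Matrix.det_fin_three]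
      unfold Nq
      simp
      ring
    rw [← h4] at hτ2
    have h5 : ((Nq (n 0 0) (n 1 1) (n 2 2) (K 1 2) (K 0 2) (K 0 1) : ℤ) : ℚ) ^ 2 = (N : ℚ) ^ 2 := by
      linear_combination hτ2 / 4
    exact_mod_cast h5
  · rw [hadj, hKeq]


theorem exists_mul_mem {a b : ℚ} {O : Submodule ℤ ℍ[ℚ, a, b]} (hO : IsLattice 4 O)
    (x : ℍ[ℚ, a, b]) : ∃ k : ℤ, k ≠ 0 ∧ k • x ∈ O := by
  obtain ⟨v, hv, hspan⟩ := hO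
  have htop : Submodule.span ℚ (Set.range v) = ⊤ :=
    hv.span_eq_top_of_card_eq_finrank' (by
      rw [QuaternionAlgebra.finrank_eq_four]; rfl)
  have hx : x ∈ Submodule.span ℚ (Set.range v) := htop ▸ Submodule.mem_top
  induction hx using Submodule.span_induction with
  | mem x h => exact ⟨1, one_ne_zero, by rw [one_smul, ← hspan]; exact Submodule.subset_span h⟩
  | zero => exact ⟨1, one_ne_zero, by rw [smul_zero]; exact O.zero_mem⟩
  | add x y _ _ hx hy =>
    obtain ⟨k, hk, hk'⟩ := hx
    obtain ⟨l, hl, hl'⟩ := hy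
    refine ⟨k * l, mul_ne_zero hk hl, ?_⟩
    rw [smul_add]
    apply O.add_mem
    · rw [mul_comm, mul_smul]; exact O.smul_mem _ hk'
    · rw [mul_smul]; exact O.smul_mem _ hl'
  | smul q x _ hx =>
    obtain ⟨k, hk, hk'⟩ := hx
    refine ⟨k * q.den, mul_ne_zero hk (by exact_mod_cast q.den_nz), ?_⟩
    have : (k * (q.den : ℤ)) • q • x = q.num • k • x := by
      simp only [← Int.cast_smul_eq_zsmul ℚ, smul_smul]
      congr 1
      push_cast
      have := Rat.mul_den_eq_num q
      linear_combination (k : ℚ) * this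
    rw [this]
    exact O.smul_mem _ hk'

theorem exists_gram {a b : ℚ} {O : Submodule ℤ ℍ[ℚ, a, b]} (hO : IsLattice 4 O) (h1 : 1 ∈ O)
    (hnrd : ∀ x ∈ O, ∃ m : ℤ, nrd x = m) :
    ∃ A : Matrix (Fin 3) (Fin 3) ℤ, IsGramOf (Lsub O : Set ℍ[ℚ, a, b]) A := by
  have hle : Lsub O ≤ O := by
    rintro x ⟨⟨m, r, hr, rfl⟩, -⟩
    exact O.add_mem (O.smul_mem _ h1) (by rw [two_nsmul]; exact O.add_mem hr hr)
  have hfg : Module.Finite ℤ O := by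
    obtain ⟨v, -, rfl⟩ := hO
    exact Module.Finite.span_of_finite ℤ (Set.finite_range v)
  have hfin : Module.Finite ℤ (Lsub O) :=
    Module.Finite.of_injective (Submodule.inclusion hle) (Submodule.inclusion_injective hle)
  have htf0 : Module.IsTorsionFree ℤ ℍ[ℚ, a, b] := Module.IsTorsionFree.trans_faithfulSMul ℤ ℚ _
  have htf : Module.IsTorsionFree ℤ (Lsub O) := inferInstance
  let B := Module.finBasis ℤ (Lsub O)
  set n := Module.finrank ℤ (Lsub O) with hn
  let f : Fin n → ℍ[ℚ, a, b] := fun i => (B i : ℍ[ℚ, a, b])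
  have hfL : ∀ i, f i ∈ Lsub O := fun i => (B i).2
  have hspan : Submodule.span ℤ (Set.range f) = Lsub O := by
    have h := B.span_eq
    have h2 := congrArg (Submodule.map (Lsub O).subtype) h
    rw [Submodule.map_span, Submodule.map_top, Submodule.range_subtype, ← Set.range_comp] at h2
    exact h2
  have hliZ : LinearIndependent ℤ f :=
    B.linearIndependent.map' (Lsub O).subtype (Submodule.ker_subtype _)
  have hli : LinearIndependent ℚ f := (LinearIndependent.iff_fractionRing ℤ ℚ).mp hliZ
  have hQ : Submodule.span ℚ (Set.range f) =
      LinearMap.ker (QuaternionAlgebra.reₗ (R := ℚ) a 0 b) := by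
    apply le_antisymm
    · rw [Submodule.span_le]
      rintro _ ⟨k, rfl⟩
      exact re_zero_of (hfL k).2
    · intro x hx
      have hx0 : x.re = 0 := hx
      obtain ⟨k, hk, hkx⟩ := exists_mul_mem hO x
      have hm : (-0 : ℤ) • (1 : ℍ[ℚ, a, b]) + 2 • (k • x) ∈ Lsub O :=
        mem_Lsub hkx (by rw [z_re, hx0]; simp)
      rw [neg_zero, zero_smul, zero_add, ← hspan] at hm
      have hm2 : (2 • (k • x)) ∈ Submodule.span ℚ (Set.range f) :=
        Submodule.span_subset_span ℤ ℚ _ hm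
      have : x = ((2 * k : ℚ))⁻¹ • (2 • (k • x)) := by
        have hk' : (k : ℚ) ≠ 0 := by exact_mod_cast hk
        rw [two_nsmul, ← Int.cast_smul_eq_zsmul ℚ, ← two_smul ℚ ((k : ℚ) • x), smul_smul, smul_smul,
          mul_assoc, inv_mul_cancel₀ (mul_ne_zero two_ne_zero hk'), one_smul]
      rw [this]
      exact Submodule.smul_mem _ _ hm2
  have hn3 : n = 3 := by
    have e1 := finrank_span_eq_card hli
    rw [hQ, Fintype.card_fin] at e1
    have e2 := LinearMap.finrank_range_add_finrank_ker (QuaternionAlgebra.reₗ (R := ℚ) a 0 b)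
    have e3 : LinearMap.range (QuaternionAlgebra.reₗ (R := ℚ) a 0 b) = ⊤ :=
      LinearMap.range_eq_top.mpr fun q => ⟨⟨q, 0, 0, 0⟩, rfl⟩
    rw [e3, e1, QuaternionAlgebra.finrank_eq_four, finrank_top, Module.finrank_self] at e2
    omega
  clear_value f
  clear B
  clear_value n
  subst hn3
  have hex : ∀ i j, ∃ m : ℤ, (m : ℚ) = qbil (f i) (f j) := by
    intro i j
    obtain ⟨m1, hm1⟩ := hnrd _ (hle (hfL i))
    obtain ⟨m2, hm2⟩ := hnrd _ (hle (hfL j))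
    obtain ⟨m3, hm3⟩ := hnrd _ (O.add_mem (hle (hfL i)) (hle (hfL j)))
    refine ⟨m3 - m1 - m2, ?_⟩
    rw [nrd_eq] at hm1 hm2 hm3
    simp only [QuaternionAlgebra.re_add, QuaternionAlgebra.imI_add, QuaternionAlgebra.imJ_add,
      QuaternionAlgebra.imK_add] at hm3
    rw [qbil_eq]
    push_cast
    linear_combination hm1 + hm2 - hm3
  choose A hA using hex
  exact ⟨Matrix.of A, f, hli, by rw [Submodule.span_eq]; exact hspan, hA⟩

/-- local behaviour at all primes for a given Gram matrix -/
theorem local_iff {N₁ N₂ : ℕ} (S : EichlerSetting N₁ N₂) {d : ℤ}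
    (hfund : IsFundamentalDiscriminant (-d)) (i : Fin S.h) {G : Matrix (Fin 3) (Fin 3) ℤ}
    (hG : IsGramOf (S.L i) G) :
    LocallyPrimitivelyRepresents G d ↔
      (∀ (p : ℕ) (hp : p.Prime), p ∣ N₁ → ¬ SplitIn d p hp) ∧
        (∀ (p : ℕ) (hp : p.Prime), p ∣ N₂ → ¬ InertIn d p hp) := by
  obtain ⟨f, -, hspan, hGf⟩ := hG
  have hLs : S.L i = (Lsub (S.Rord i) : Set _) := rfl
  rw [hLs, Submodule.span_eq] at hspan
  have hN : 0 < N₁ * N₂ := Nat.mul_pos S.N₁_pos S.N₂_pos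
  obtain ⟨hre, hdet, A, B, C, u, v, w, hNq, hadj⟩ := frame (S.Rord_order i).2.1 (S.Rord_order i).2.2
    (fun x hx => S.I_nrd_integral i i x (by rw [S.I_diag]; exact hx)) hN (S.Rord_disc i) hspan
  rw [Matrix.adjugate_fin_three_of] at hadj
  have hM : ∀ s t, (Fmat f * Matrix.diagonal ![-S.a, -S.b, S.a * S.b] * (Fmat f)ᵀ) s t =
      -S.a * (f s).imI * (f t).imI - S.b * (f s).imJ * (f t).imJ
        + S.a * S.b * (f s).imK * (f t).imK := by
    intro s t
    simp [Fmat, Matrix.mul_apply, Fin.sum_univ_three, Matrix.diagonal_apply]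
    ring
  rw [hadj] at hM
  have hGM : ∀ s t, (G s t : ℚ) = 2 * (-S.a * (f s).imI * (f t).imI - S.b * (f s).imJ * (f t).imJ
        + S.a * S.b * (f s).imK * (f t).imK) := by
    intro s t
    rw [hGf, qbil_eq, hre, hre]
    ring
  have m00 := hM 0 0
  have m11 := hM 1 1
  have m22 := hM 2 2
  have m12 := hM 1 2
  have m02 := hM 0 2
  have m01 := hM 0 1
  simp at m00 m11 m22 m12 m02 m01
  have g00 : G 0 0 = 2 * (4 * B * C - u ^ 2) := by
    have := hGM 0 0
    qify
    rw [this]; linear_combination -2 * m00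
  have g11 : G 1 1 = 2 * (4 * A * C - v ^ 2) := by
    have := hGM 1 1
    qify
    rw [this]; linear_combination -2 * m11
  have g22 : G 2 2 = 2 * (4 * A * B - w ^ 2) := by
    have := hGM 2 2
    qify
    rw [this]; linear_combination -2 * m22
  have g12 : G 1 2 = 2 * (v * w - 2 * A * u) := by
    have := hGM 1 2
    qify
    rw [this]; linear_combination -2 * m12
  have g02 : G 0 2 = 2 * (u * w - 2 * B * v) := by
    have := hGM 0 2
    qify
    rw [this]; linear_combination -2 * m02
  have g01 : G 0 1 = 2 * (u * v - 2 * C * w) := by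
    have := hGM 0 1
    qify
    rw [this]; linear_combination -2 * m01
  have gs : ∀ s t, G s t = G t s := by
    intro s t
    have : (G s t : ℚ) = G t s := by rw [hGM, hGM]; ring
    exact_mod_cast this
  have hrep : ∀ (p : ℕ) (hp : p.Prime),
      haveI : Fact p.Prime := ⟨hp⟩
      ((∃ x : Fin 3 → ℤ_[p], (∃ i, IsUnit (x i)) ∧
        x ⬝ᵥ (G.map (Int.cast : ℤ → ℤ_[p])).mulVec x = ((2 * d : ℤ) : ℤ_[p])) ↔
      ∃ x1 x2 x3 : ℤ_[p], Fq (A : ℤ_[p]) B C u v w x1 x2 x3 = d) := by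
    intro p hp
    have : Fact p.Prime := ⟨hp⟩
    have key : ∀ x : Fin 3 → ℤ_[p], x ⬝ᵥ (G.map (Int.cast : ℤ → ℤ_[p])).mulVec x =
        2 * Fq (A : ℤ_[p]) B C u v w (x 0) (x 1) (x 2) := by
      intro x
      simp [dotProduct, Matrix.mulVec, Fin.sum_univ_three, g00, g11, g22, g12, g02, g01, gs 1 0,
        gs 2 0, gs 2 1, Fq]
      ring
    constructor
    · rintro ⟨x, -, hx⟩
      refine ⟨x 0, x 1, x 2, ?_⟩
      rw [key] at hx
      push_cast at hx
      exact mul_left_cancel₀ two_ne_zero hx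
    · rintro ⟨x1, x2, x3, hx⟩
      refine ⟨![x1, x2, x3], ?_, ?_⟩
      · rcases prim_of_rep hfund hx with h | h | h
        · exact ⟨0, h⟩
        · exact ⟨1, h⟩
        · exact ⟨2, h⟩
      · rw [key]
        simp only [Matrix.cons_val]
        rw [hx]; push_cast; rfl
  have hram : ∀ (p : ℕ) (hp : p.Prime),
      haveI : Fact p.Prime := ⟨hp⟩
      (p ∣ N₁ ↔ Aniso p A B C u v w) := by
    intro p hp
    rw [← S.ram_iff p hp]
    apply ram_aniso hp (x1 := (f 0).imI) (y1 := (f 0).imJ) (z1 := (f 0).imK) (x2 := (f 1).imI)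
      (y2 := (f 1).imJ) (z2 := (f 1).imK) (x3 := (f 2).imI) (y3 := (f 2).imJ) (z3 := (f 2).imK)
    · linear_combination -m00
    · linear_combination -m11
    · linear_combination -m22
    · linear_combination -m12
    · linear_combination -m02
    · linear_combination -m01
    · intro h
      apply hdet
      rw [Matrix.det_fin_three]
      simp only [Fmat, Matrix.of_apply, Matrix.cons_val]
      linear_combination h
  have habs : (Nq A B C u v w).natAbs = N₁ * N₂ := by
    have h := Int.natAbs_eq_iff_sq_eq.mpr hNq
    rw [Int.natAbs_natCast] at h
    exact h
  have hdvd : ∀ p : ℕ, (p : ℤ) ∣ Nq A B C u v w ↔ p ∣ N₁ * N₂ := by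
    intro p
    rw [Int.natCast_dvd, habs]
  have hexact : ∀ p : ℕ, p.Prime → p ∣ N₁ * N₂ →
      ∃ n', Nq A B C u v w = p * n' ∧ ¬ (p : ℤ) ∣ n' := by
    intro p hp h
    obtain ⟨n', hn'⟩ := (hdvd p).mpr h
    refine ⟨n', hn', ?_⟩
    rintro ⟨k, rfl⟩
    have h2 : ((p * p : ℕ) : ℤ) ∣ Nq A B C u v w := ⟨k, by rw [hn']; push_cast; ring⟩
    rw [hdvd] at h2
    exact hp.one_lt.ne' (Nat.isUnit_iff.mp (S.squarefree p h2))
  have hnot : ∀ p : ℕ, p.Prime → p ∣ N₂ → ¬ p ∣ N₁ := by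
    intro p hp h2 h1
    exact hp.one_lt.ne' (Nat.isUnit_iff.mp (S.squarefree p (mul_dvd_mul h1 h2)))
  constructor
  · intro h
    constructor
    · intro p hp h1
      obtain ⟨n', hn', hn⟩ := hexact p hp (h1.mul_right _)
      exact (local_ram hp hn' hn hfund ((hram p hp).mp h1)).mp ((hrep p hp).mp (h p hp))
    · intro p hp h2
      obtain ⟨n', hn', hn⟩ := hexact p hp (h2.mul_left _)
      exact (local_unram hp hn' hn hfund (fun ha => hnot p hp h2 ((hram p hp).mpr ha))).mp
        ((hrep p hp).mp (h p hp))
  · rintro ⟨hs, hi⟩ p hp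
    refine (hrep p hp).mpr ?_
    by_cases h1 : p ∣ N₁
    · obtain ⟨n', hn', hn⟩ := hexact p hp (h1.mul_right _)
      exact (local_ram hp hn' hn hfund ((hram p hp).mp h1)).mpr (hs p hp h1)
    by_cases h2 : p ∣ N₂
    · obtain ⟨n', hn', hn⟩ := hexact p hp (h2.mul_left _)
      exact (local_unram hp hn' hn hfund (fun ha => hnot p hp h2 ((hram p hp).mpr ha))).mpr
        (hi p hp h2)
    · have : Fact p.Prime := ⟨hp⟩
      apply local_good _ hfund
      rw [hdvd, hp.dvd_mul]
      tauto

/-- For a fundamental discriminant `-d`, `d` is represented primitively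
over all `ℤ_p` by the ternary lattices `L_i` if and only if no prime `p ∣ N₁` is split in
`ℚ(√-d)` and no prime `p ∣ N₂` is inert in `ℚ(√-d)`. -/
theorem locally_primitively_represented_iff_split_inert (N₁ N₂ : ℕ)
    (S : EichlerSetting N₁ N₂) (d : ℕ) (hd : 0 < d)
    (hfund : IsFundamentalDiscriminant (-(d : ℤ))) :
    (∀ (i : Fin S.h) (A : Matrix (Fin 3) (Fin 3) ℤ), IsGramOf (S.L i) A →
        LocallyPrimitivelyRepresents A d) ↔
      (∀ (p : ℕ) (hp : p.Prime), p ∣ N₁ → ¬ SplitIn d p hp) ∧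
        (∀ (p : ℕ) (hp : p.Prime), p ∣ N₂ → ¬ InertIn d p hp) := by
  constructor
  · intro h
    obtain ⟨A, hA⟩ := exists_gram (S.Rord_order ⟨0, S.h_pos⟩).1 (S.Rord_order ⟨0, S.h_pos⟩).2.1
      (fun x hx => S.I_nrd_integral ⟨0, S.h_pos⟩ ⟨0, S.h_pos⟩ x (by rw [S.I_diag]; exact hx))
    exact (local_iff S hfund ⟨0, S.h_pos⟩ hA).mp (h _ A hA)
  · intro h i A hA
    exact (local_iff S hfund i hA).mpr h

end Rep
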